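/- arXiv:1405.6266 — 2 statements merged into one kernel-verified Lean document; each statement's English description precedes it below -/
import Mathlib

section
/- The Copeland–Erdős number 0.2357111317…, i.e., the real number whose decimal digit sequence is obtained by concatenating the base-10 expansions of the prime numbers 2, 3, 5, 7, 11, 13, … in increasing order, is normal to base 10. -/
open Filter

/-- Number of (possibly overlapping) occurrences of the string `σ` as a contiguous
substring of the string `w` (strings are lists of decimal digits). -/
def nu (w σ : List ℕ) : ℕ :=
  ((Finset.range w.length).filter (fun i => σ <+: w.drop i)).card

/-- The string of base-`g` digits of `a`, most significant digit first. -/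
def digs (g a : ℕ) : List ℕ :=
  (Nat.digits g a).reverse

/-- The `N`-th digit (indexed from `0`) of the infinite base-`g` digit sequence obtained by
concatenating the digit strings of `a 1`, `a 2`, `a 3`, … . -/
def concatDigit (g : ℕ) (a : ℕ → ℕ) (N : ℕ) : ℕ :=
  (((List.range (N + 1)).map (fun n => digs g (a (n + 1)))).flatten).getD N 0

/-- An infinite sequence `x` of base-`g` digits is normal to base `g` if for every nonempty
string `σ` of base-`g` digits, the frequency of occurrences of `σ` among the first `N` digits
tends to `g^{-|σ|}`. -/
def IsNormalSeq (g : ℕ) (x : ℕ → ℕ) : Prop :=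
  ∀ σ : List ℕ, σ ≠ [] → (∀ d ∈ σ, d < g) →
    Tendsto (fun N : ℕ => (nu ((List.range N).map x) σ : ℝ) / (N : ℝ)) atTop
      (nhds (1 / (g : ℝ) ^ σ.length))

/-!
Almost every integer has the expected digit statistics: cut the base-`g` expansion of an integer
into consecutive blocks of `k` digits; below a power of `g ^ k` these blocks are independent and
uniform, so by Hoeffding's inequality (applied to each of the `k` ways of cutting) at most
`O(N ^ θ)` integers below `N`, with some `θ < 1`, contain a given word of length `k` with a
frequency that is off by more than `ε`. By Chebyshev's lower bound the primes below `N` number more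
than a constant times `N ^ θ` for every `θ < 1`, so atypical integers are negligible among them.
Concatenating words changes the number of occurrences of a fixed word by at most its length at each
junction, and the junctions are negligible because the words get longer and longer.
-/

open Finset Asymptotics Topology

section Occurrences

variable (u v w σ : List ℕ)

lemma nu_le_length : nu w σ ≤ w.length :=
  (card_filter_le _ _).trans_eq (card_range _)

lemma nu_append :
    nu (u ++ v) σ = #{i ∈ range u.length | σ <+: (u ++ v).drop i} + nu v σ := by
  simp only [nu, List.length_append, card_filter, sum_range_add, List.drop_length_add_append]

lemma nu_add_nu_le_nu_append : nu u σ + nu v σ ≤ nu (u ++ v) σ := by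
  rw [nu_append]
  refine Nat.add_le_add_right (card_le_card fun i hi => ?_) _
  rw [mem_filter, mem_range] at hi ⊢
  rw [List.drop_append_of_le_length hi.1.le]
  exact ⟨hi.1, hi.2.trans (List.prefix_append _ _)⟩

lemma nu_append_le : nu (u ++ v) σ ≤ nu u σ + nu v σ + σ.length := by
  have subset_union : {i ∈ range u.length | σ <+: (u ++ v).drop i} ⊆
      {i ∈ range u.length | σ <+: u.drop i} ∪ Ico (u.length - σ.length) u.length := by
    intro i
    simp only [mem_union, mem_filter, mem_range, mem_Ico]
    rintro ⟨hi, hpre⟩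
    rcases le_or_gt (u.length - σ.length) i with hcross | hinside
    · exact .inr ⟨hcross, hi⟩
    · rw [List.drop_append_of_le_length hi.le] at hpre
      refine .inl ⟨hi, List.prefix_of_prefix_length_le hpre (List.prefix_append _ _) ?_⟩
      rw [List.length_drop]
      lia
  have left_le : #{i ∈ range u.length | σ <+: (u ++ v).drop i} ≤ nu u σ + σ.length :=
    calc _ ≤ _ := card_le_card subset_union
      _ ≤ _ := card_union_le _ _
      _ ≤ nu u σ + σ.length := by rw [Nat.card_Ico]; exact Nat.add_le_add_left (by lia) _
  rw [nu_append]
  lia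

/-- The signed error made when the number of occurrences of `σ` in the base-`g` word `w` is
predicted to be `|w| / g ^ |σ|`. -/
noncomputable def discrepancy (g : ℕ) (w σ : List ℕ) : ℝ :=
  nu w σ - w.length / (g : ℝ) ^ σ.length

variable (g : ℕ)

lemma abs_discrepancy_le_length : |discrepancy g w σ| ≤ w.length := by
  have hnu : (nu w σ : ℝ) ≤ w.length := mod_cast nu_le_length w σ
  have hexp : (w.length : ℝ) / (g : ℝ) ^ σ.length ≤ w.length := by
    rw [div_eq_mul_inv, ← Nat.cast_pow]
    exact mul_le_of_le_one_right (Nat.cast_nonneg _) (Nat.cast_inv_le_one _)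
  refine abs_sub_le_of_nonneg_of_le ?_ hnu ?_ hexp <;> positivity

lemma abs_discrepancy_append_le :
    |discrepancy g (u ++ v) σ| ≤ |discrepancy g u σ| + |discrepancy g v σ| + σ.length := by
  have hge : (nu u σ + nu v σ : ℝ) ≤ nu (u ++ v) σ := mod_cast nu_add_nu_le_nu_append u v σ
  have hle : (nu (u ++ v) σ : ℝ) ≤ nu u σ + nu v σ + σ.length := mod_cast nu_append_le u v σ
  have hdiff : |discrepancy g (u ++ v) σ - (discrepancy g u σ + discrepancy g v σ)| ≤ σ.length := by
    rw [abs_le]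
    simp only [discrepancy, List.length_append, Nat.cast_add, add_div]
    constructor <;> linarith
  linarith [abs_add_le (discrepancy g u σ) (discrepancy g v σ),
    abs_sub_abs_le_abs_sub (discrepancy g (u ++ v) σ) (discrepancy g u σ + discrepancy g v σ)]

end Occurrences

section Concatenation

/-- The finite word `w 0 ++ w 1 ++ ⋯ ++ w (n - 1)`. -/
def joinedWord (w : ℕ → List ℕ) (n : ℕ) : List ℕ :=
  ((List.range n).map w).flatten

/-- The infinite word `w 0 ++ w 1 ++ ⋯`. Its `N`-th letter is looked up among the first `N + 1`
words, which reach it as soon as no word is empty. -/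
def joinedStream (w : ℕ → List ℕ) (N : ℕ) : ℕ :=
  (joinedWord w (N + 1)).getD N 0

lemma concatDigit_eq_joinedStream (g : ℕ) (a : ℕ → ℕ) :
    concatDigit g a = joinedStream fun n => digs g (a (n + 1)) :=
  rfl

variable {w : ℕ → List ℕ} {g : ℕ} {σ : List ℕ}

lemma joinedWord_succ (n : ℕ) : joinedWord w (n + 1) = joinedWord w n ++ w n := by
  simp [joinedWord, List.range_succ]

lemma length_joinedWord (n : ℕ) : (joinedWord w n).length = ∑ j ∈ range n, (w j).length := by
  induction n with
  | zero => rfl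
  | succ n ih => rw [joinedWord_succ, List.length_append, ih, sum_range_succ]

lemma joinedWord_prefix_of_le {m n : ℕ} (hmn : m ≤ n) : joinedWord w m <+: joinedWord w n := by
  induction n, hmn using Nat.le_induction with
  | base => exact List.prefix_rfl
  | succ n _ ih => exact joinedWord_succ (w := w) n ▸ ih.trans (List.prefix_append _ _)

lemma strictMono_length_joinedWord (hw : ∀ n, w n ≠ []) :
    StrictMono fun n => (joinedWord w n).length :=
  strictMono_nat_of_lt_succ fun n => by
    simpa [joinedWord_succ] using List.length_pos_iff.2 (hw n)

lemma map_joinedStream_range (hw : ∀ n, w n ≠ []) {N n : ℕ} (hN : N ≤ (joinedWord w n).length) :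
    (List.range N).map (joinedStream w) = (joinedWord w n).take N := by
  refine List.ext_getElem (by simpa using hN) fun i hi _ => ?_
  have hiN : i < N := by simpa using hi
  have hlookup : i < (joinedWord w (i + 1)).length :=
    (strictMono_length_joinedWord hw).le_apply (x := i + 1)
  rw [List.getElem_map, List.getElem_range, List.getElem_take, joinedStream,
    List.getD_eq_getElem _ _ hlookup]
  rcases le_total (i + 1) n with hle | hle
  · exact (joinedWord_prefix_of_le hle).getElem hlookup
  · exact ((joinedWord_prefix_of_le hle).getElem (hiN.trans_le hN)).symm

lemma abs_discrepancy_joinedWord_le (n : ℕ) :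
    |discrepancy g (joinedWord w n) σ| ≤
      ∑ j ∈ range n, |discrepancy g (w j) σ| + n * σ.length := by
  induction n with
  | zero => simp [joinedWord, discrepancy, nu]
  | succ n ih =>
    rw [joinedWord_succ, sum_range_succ, Nat.cast_succ]
    linarith [abs_discrepancy_append_le (joinedWord w n) (w n) σ g]

lemma isLittleO_natCast_length_joinedWord (hw : ∀ n, w n ≠ [])
    (hlen : Tendsto (fun n => (w n).length) atTop atTop) :
    (fun n : ℕ => (n : ℝ)) =o[atTop] fun n => ((joinedWord w n).length : ℝ) := by
  have htotal : Tendsto (fun n => ∑ j ∈ range n, ((w j).length : ℝ)) atTop atTop := by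
    simpa only [length_joinedWord, Nat.cast_sum, Function.comp_def] using
      (tendsto_natCast_atTop_atTop (R := ℝ)).comp
        (strictMono_length_joinedWord hw).tendsto_atTop
  have hone : (fun _ : ℕ => (1 : ℝ)) =o[atTop] fun n => ((w n).length : ℝ) :=
    (isLittleO_one_left_iff ℝ).2 <|
      tendsto_norm_atTop_atTop.comp (tendsto_natCast_atTop_atTop.comp hlen)
  simpa [length_joinedWord] using hone.sum_range (fun n => Nat.cast_nonneg _) htotal

lemma exists_abs_discrepancy_joinedStream_le (hw : ∀ n, w n ≠ []) {N : ℕ} (hN : 0 < N) :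
    ∃ n, (joinedWord w n).length < N ∧ N ≤ (joinedWord w (n + 1)).length ∧
      |discrepancy g ((List.range N).map (joinedStream w)) σ| ≤
        |discrepancy g (joinedWord w n) σ| + (w n).length + σ.length := by
  have hmono := strictMono_length_joinedWord hw
  obtain ⟨n, hlt, hle⟩ := hmono.exists_between_of_tendsto_atTop hmono.tendsto_atTop
    (x := N) (by simpa [joinedWord] using hN)
  refine ⟨n, hlt, hle, ?_⟩
  rw [map_joinedStream_range hw hle, joinedWord_succ, List.take_append,
    List.take_of_length_le hlt.le]
  set t := (w n).take (N - (joinedWord w n).length)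
  have ht : (t.length : ℝ) ≤ (w n).length := mod_cast (List.take_sublist _ _).length_le
  linarith [abs_discrepancy_append_le (joinedWord w n) t σ g, abs_discrepancy_le_length t σ g]

theorem discrepancy_joinedStream_isLittleO (hw : ∀ n, w n ≠ [])
    (hlen : Tendsto (fun n => (w n).length) atTop atTop)
    (hlast : (fun n => ((w n).length : ℝ)) =o[atTop] fun n => ((joinedWord w n).length : ℝ))
    (hsum : (fun n => ∑ j ∈ range n, |discrepancy g (w j) σ|) =o[atTop]
      fun n => ((joinedWord w n).length : ℝ)) :
    (fun N => discrepancy g ((List.range N).map (joinedStream w)) σ) =o[atTop]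
      fun N => (N : ℝ) := by
  have hmono := strictMono_length_joinedWord hw
  have hcount := isLittleO_natCast_length_joinedWord hw hlen
  have hconst : (fun _ : ℕ => (σ.length : ℝ)) =o[atTop]
      fun n => ((joinedWord w n).length : ℝ) :=
    isLittleO_const_left.2 <| .inr <|
      tendsto_norm_atTop_atTop.comp (tendsto_natCast_atTop_atTop.comp hmono.tendsto_atTop)
  have hword : (fun n => discrepancy g (joinedWord w n) σ) =o[atTop]
      fun n => ((joinedWord w n).length : ℝ) := by
    refine IsBigO.trans_isLittleO (.of_bound' <| .of_forall fun n => ?_)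
      (hsum.add (hcount.const_mul_left (σ.length : ℝ)))
    rw [mul_comm]
    exact (abs_discrepancy_joinedWord_le n).trans (le_abs_self _)
  choose! idx hlt hle hdisc using fun N (hN : 0 < N) =>
    exists_abs_discrepancy_joinedStream_le (g := g) (σ := σ) hw hN
  have hidx : Tendsto idx atTop atTop := tendsto_atTop.2 fun n => by
    filter_upwards [eventually_gt_atTop (joinedWord w n).length] with N hN
    exact Nat.lt_succ_iff.1 (hmono.lt_iff_lt.1 (hN.trans_le (hle N (by lia))))
  refine (IsBigO.of_bound' ?_).trans_isLittleO
    ((((hword.abs_left.add hlast).add hconst).comp_tendsto hidx).trans_isBigO (.of_bound' ?_))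
  · filter_upwards [eventually_gt_atTop 0] with N hN
    exact (hdisc N hN).trans (le_abs_self _)
  · filter_upwards [eventually_gt_atTop 0] with N hN
    simpa using (hlt N hN).le

lemma tendsto_nu_div_of_discrepancy_isLittleO {x : ℕ → ℕ}
    (hx : (fun N => discrepancy g ((List.range N).map x) σ) =o[atTop] fun N => (N : ℝ)) :
    Tendsto (fun N : ℕ => (nu ((List.range N).map x) σ : ℝ) / N) atTop
      (𝓝 (1 / (g : ℝ) ^ σ.length)) := by
  have hsum := hx.tendsto_div_nhds_zero.add_const (1 / (g : ℝ) ^ σ.length)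
  rw [zero_add] at hsum
  refine hsum.congr' ?_
  filter_upwards [eventually_gt_atTop 0] with N hN
  simp only [discrepancy, List.length_map, List.length_range]
  field_simp
  ring

end Concatenation

section Hoeffding

variable {M : ℕ}

lemma sum_prod_digits_eq_pow (f : ℕ → ℝ) (q : ℕ) :
    ∑ n ∈ range (M ^ q), ∏ j ∈ range q, f (n / M ^ j % M) = (∑ d ∈ range M, f d) ^ q := by
  simp only [Finset.sum_range, Finset.prod_range, Fintype.sum_pow]
  refine Fintype.sum_equiv finFunctionFinEquiv.symm _ _ fun n => ?_
  simp only [finFunctionFinEquiv_symm_apply_val]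

lemma sum_exp_mul_le_of_sum_eq_zero {X : ℕ → ℝ} (hX : ∀ d, |X d| ≤ 1)
    (hX0 : ∑ d ∈ range M, X d = 0) (t : ℝ) :
    ∑ d ∈ range M, Real.exp (t * X d) ≤ M * Real.exp (t ^ 2 / 2) :=
  calc ∑ d ∈ range M, Real.exp (t * X d)
      ≤ ∑ d ∈ range M, (Real.cosh t + X d * Real.sinh t) :=
        sum_le_sum fun d _ => mul_comm t _ ▸ Real.exp_mul_le_cosh_add_mul_sinh (hX d) t
    _ = M * Real.cosh t := by simp [sum_add_distrib, ← sum_mul, hX0]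
    _ ≤ M * Real.exp (t ^ 2 / 2) := by gcongr; exact Real.cosh_le_exp_half_sq t

lemma card_lt_sum_digits_le {X : ℕ → ℝ} (hX : ∀ d, |X d| ≤ 1)
    (hX0 : ∑ d ∈ range M, X d = 0) {ε : ℝ} (hε : 0 ≤ ε) (q : ℕ) :
    (#{n ∈ range (M ^ q) | ε * q < ∑ j ∈ range q, X (n / M ^ j % M)} : ℝ) ≤
      M ^ q * Real.exp (-(ε ^ 2 / 2) * q) := by
  set S : ℕ → ℝ := fun n => ∑ j ∈ range q, X (n / M ^ j % M)
  have markov : (#{n ∈ range (M ^ q) | ε * q < S n} : ℝ) * Real.exp (ε * (ε * q)) ≤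
      ∑ n ∈ range (M ^ q), Real.exp (ε * S n) := by
    rw [← nsmul_eq_mul]
    refine (card_nsmul_le_sum _ _ _ fun n hn => ?_).trans
      (sum_le_sum_of_subset_of_nonneg (filter_subset _ _) fun _ _ _ => (Real.exp_pos _).le)
    have hlt : ε * q < S n := (mem_filter.1 hn).2
    gcongr
  have mgf : ∑ n ∈ range (M ^ q), Real.exp (ε * S n) ≤ (M * Real.exp (ε ^ 2 / 2)) ^ q := by
    simp only [S, mul_sum, Real.exp_sum]
    rw [sum_prod_digits_eq_pow fun d => Real.exp (ε * X d)]
    gcongr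
    exact sum_exp_mul_le_of_sum_eq_zero hX hX0 ε
  calc (#{n ∈ range (M ^ q) | ε * q < S n} : ℝ)
      ≤ (M * Real.exp (ε ^ 2 / 2)) ^ q / Real.exp (ε * (ε * q)) :=
        (le_div_iff₀ (Real.exp_pos _)).2 (markov.trans mgf)
    _ = M ^ q * Real.exp (-(ε ^ 2 / 2) * q) := by
        rw [mul_pow, ← Real.exp_nat_mul, mul_div_assoc, ← Real.exp_sub]
        ring_nf

lemma card_lt_abs_sum_digits_le {X : ℕ → ℝ} (hX : ∀ d, |X d| ≤ 1)
    (hX0 : ∑ d ∈ range M, X d = 0) {ε : ℝ} (hε : 0 ≤ ε) (q : ℕ) :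
    (#{n ∈ range (M ^ q) | ε * q < |∑ j ∈ range q, X (n / M ^ j % M)|} : ℝ) ≤
      2 * (M ^ q * Real.exp (-(ε ^ 2 / 2) * q)) := by
  have upper := card_lt_sum_digits_le hX hX0 hε q
  have lower := card_lt_sum_digits_le (X := fun d => -X d) (by simpa using hX)
    (by simpa using hX0) hε q
  simp only [sum_neg_distrib] at lower
  have union : (#{n ∈ range (M ^ q) | ε * q < |∑ j ∈ range q, X (n / M ^ j % M)|} : ℝ) ≤
      #{n ∈ range (M ^ q) | ε * q < ∑ j ∈ range q, X (n / M ^ j % M)} +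
      #{n ∈ range (M ^ q) | ε * q < -∑ j ∈ range q, X (n / M ^ j % M)} := by
    simp only [lt_abs, filter_or]
    exact mod_cast card_union_le _ _
  linarith

end Hoeffding

section Windows

/-- The number of positions `i < L` at which the `k` consecutive base-`g` digits of `a`, read
from position `i` upwards with the units at position `0`, form the number `s`. Positions beyond
the leading digit of `a` count as zeros. -/
def windowCount (g k s L a : ℕ) : ℕ :=
  Nat.count (fun i => a / g ^ i % g ^ k = s) L

variable {g k s : ℕ}

lemma windowCount_mono (a : ℕ) : Monotone fun L => windowCount g k s L a :=
  Nat.count_monotone _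

lemma windowCount_add_le (L d a : ℕ) : windowCount g k s (L + d) a ≤ windowCount g k s L a + d := by
  rw [windowCount, Nat.count_add]
  exact Nat.add_le_add_left (Nat.count_le _) _

lemma sum_range_mul {α : Type*} [AddCommMonoid α] (f : ℕ → α) (m n : ℕ) :
    ∑ i ∈ range (m * n), f i = ∑ b ∈ range m, ∑ r ∈ range n, f (b * n + r) := by
  induction m with
  | zero => simp
  | succ m ih => rw [Nat.succ_mul, sum_range_add, ih, sum_range_succ]

/- Windows starting at positions in a fixed residue class modulo `k` do not overlap: they are the
base-`g ^ k` digits of a shift of `a`. -/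
lemma windowCount_mul (q a : ℕ) :
    windowCount g k s (q * k) a = ∑ r ∈ range k, windowCount (g ^ k) 1 s q (a / g ^ r) := by
  simp only [windowCount, Nat.count_eq_card_filter_range, card_filter]
  rw [sum_range_mul, sum_comm]
  refine sum_congr rfl fun r _ => sum_congr rfl fun b _ => ?_
  rw [Nat.div_div_eq_div_mul, ← pow_mul, ← pow_add, pow_one, mul_comm k b, add_comm r]

lemma card_lt_abs_windowCount_sub_le {M : ℕ} (hs : s < M) {ε : ℝ} (hε : 0 ≤ ε) (q : ℕ) :
    (#{n ∈ range (M ^ q) | ε * q < |(windowCount M 1 s q n : ℝ) - q / M|} : ℝ) ≤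
      2 * (M ^ q * Real.exp (-(ε ^ 2 / 2) * q)) := by
  have hM : (1 : ℝ) ≤ M := mod_cast (Nat.zero_le s).trans_lt hs
  have hX : ∀ d : ℕ, |(if d = s then (1 : ℝ) else 0) - 1 / M| ≤ 1 := fun d =>
    abs_sub_le_of_nonneg_of_le (by split_ifs <;> norm_num) (by split_ifs <;> norm_num)
      (by positivity) (div_le_one_of_le₀ hM (by positivity))
  have hX0 : ∑ d ∈ range M, ((if d = s then (1 : ℝ) else 0) - 1 / M) = 0 := by
    have : (M : ℝ) ≠ 0 := by positivity
    simp [sum_sub_distrib, hs, this]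
  convert card_lt_abs_sum_digits_le hX hX0 hε q using 7 with n
  simp [windowCount, Nat.count_eq_card_filter_range, sum_sub_distrib, div_eq_mul_inv]

lemma length_digs (g a : ℕ) : (digs g a).length = (Nat.digits g a).length :=
  List.length_reverse

lemma prefix_drop_digs_iff (hg : 1 < g) {σ : List ℕ} (hσ : ∀ d ∈ σ, d < g) {a i : ℕ}
    (hi : i + σ.length ≤ (Nat.digits g a).length) :
    σ <+: (digs g a).drop i ↔
      a / g ^ ((Nat.digits g a).length - σ.length - i) % g ^ σ.length =
        Nat.ofDigits g σ.reverse := by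
  set pos := (Nat.digits g a).length - σ.length - i
  set window := ((Nat.digits g a).drop pos).take σ.length with hwindow
  have digit_lt : ∀ d ∈ window, d < g := fun d hd =>
    Nat.digits_lt_base hg (List.mem_of_mem_drop (List.mem_of_mem_take hd))
  have take_drop : ((digs g a).drop i).take σ.length = window.reverse := by
    rw [digs, List.drop_reverse, List.take_reverse, List.drop_take, List.length_take]
    congr 3 <;> lia
  have div_mod : a / g ^ pos % g ^ σ.length = Nat.ofDigits g window := by
    rw [Nat.self_div_pow_eq_ofDigits_drop _ _ hg,
      Nat.ofDigits_mod_pow_eq_ofDigits_take _ (by lia)]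
    exact fun d hd => Nat.digits_lt_base hg (List.mem_of_mem_drop hd)
  rw [List.prefix_iff_eq_take, take_drop, div_mod, ← List.reverse_eq_iff]
  refine ⟨fun h => by rw [h], fun h => (Nat.ofDigits_inj_of_len_eq hg ?_ digit_lt ?_ h).symm⟩
  · simp only [hwindow, List.length_take, List.length_drop, List.length_reverse]
    lia
  · simpa using hσ

lemma nu_digs_eq_windowCount (hg : 1 < g) {σ : List ℕ} (hσ : ∀ d ∈ σ, d < g) (hσ0 : σ ≠ [])
    (a : ℕ) :
    nu (digs g a) σ = windowCount g σ.length (Nat.ofDigits g σ.reverse)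
      ((Nat.digits g a).length + 1 - σ.length) a := by
  have hk : 0 < σ.length := List.length_pos_iff.2 hσ0
  have fits (i : ℕ) (hpre : σ <+: (digs g a).drop i) :
      i + σ.length ≤ (Nat.digits g a).length := by
    have hle := hpre.length_le
    rw [List.length_drop, length_digs] at hle
    lia
  rw [nu, windowCount, Nat.count_eq_card_filter_range, length_digs]
  set m := (Nat.digits g a).length
  refine card_nbij' (fun i => m - σ.length - i) (fun i => m - σ.length - i) ?_ ?_ ?_ ?_ <;>
    simp only [Set.MapsTo, Set.LeftInvOn, coe_filter, mem_range, Set.mem_ofPred_eq]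
  · rintro i ⟨-, hpre⟩
    have hfit := fits i hpre
    exact ⟨by lia, (prefix_drop_digs_iff hg hσ hfit).1 hpre⟩
  · rintro i ⟨hi, hwin⟩
    refine ⟨by lia, (prefix_drop_digs_iff hg hσ (by lia)).2 ?_⟩
    rwa [Nat.sub_sub_self (by lia)]
  · rintro i ⟨-, hpre⟩
    have hfit := fits i hpre
    lia
  · rintro i ⟨hi, -⟩
    lia

end Windows

section Atypical

/-- The integer `a` is `ε`-atypical for `σ` if the number of occurrences of `σ` among its base-`g`
digits is off by more than the proportion `ε` of its number of digits. These are the integers that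
fail to be `(ε, k)`-normal in the sense of Besicovitch, for a single word `σ` of length `k`. -/
def IsAtypical (g : ℕ) (σ : List ℕ) (ε : ℝ) (a : ℕ) : Prop :=
  ε * (digs g a).length < |discrepancy g (digs g a) σ|

noncomputable instance (g : ℕ) (σ : List ℕ) (ε : ℝ) : DecidablePred (IsAtypical g σ ε) :=
  Classical.decPred _

variable {g k s a q : ℕ} {σ : List ℕ} {ε : ℝ}

lemma abs_discrepancy_digs_sub_le (hg : 1 < g) (hσ : ∀ d ∈ σ, d < g) (hσ0 : σ ≠ [])
    (hlo : (digs g a).length ≤ q * σ.length)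
    (hhi : q * σ.length ≤ (digs g a).length + σ.length) :
    |discrepancy g (digs g a) σ -
      ((windowCount g σ.length (Nat.ofDigits g σ.reverse) (q * σ.length) a : ℝ) -
        (q * σ.length : ℕ) / (g : ℝ) ^ σ.length)| ≤ 2 * σ.length := by
  set k := σ.length
  set s := Nat.ofDigits g σ.reverse
  have hk : 0 < k := List.length_pos_iff.2 hσ0
  have hnu : nu (digs g a) σ = windowCount g k s ((digs g a).length + 1 - k) a := by
    rw [nu_digs_eq_windowCount hg hσ hσ0, length_digs]
  obtain ⟨d, hd⟩ := Nat.exists_eq_add_of_le (show (digs g a).length + 1 - k ≤ q * k by lia)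
  have hge : (nu (digs g a) σ : ℝ) ≤ windowCount g k s (q * k) a := by
    rw [hnu, hd]
    exact mod_cast windowCount_mono a (Nat.le_add_right _ d)
  have hle : (windowCount g k s (q * k) a : ℝ) ≤ nu (digs g a) σ + 2 * k := by
    have := windowCount_add_le (g := g) (k := k) (s := s) ((digs g a).length + 1 - k) d a
    rw [hnu, hd]
    exact mod_cast (by lia)
  have hexp : ((q * k : ℕ) - (digs g a).length : ℝ) / (g : ℝ) ^ k ∈ Set.Icc (0 : ℝ) k := by
    have hlo' : ((digs g a).length : ℝ) ≤ (q * k : ℕ) := mod_cast hlo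
    have hhi' : ((q * k : ℕ) : ℝ) ≤ (digs g a).length + k := mod_cast hhi
    have hgk : (1 : ℝ) ≤ (g : ℝ) ^ k := one_le_pow₀ (mod_cast hg.le)
    exact ⟨div_nonneg (by linarith) (by positivity),
      (div_le_self (by linarith) hgk).trans (by linarith)⟩
  rw [sub_div] at hexp
  rw [abs_le, discrepancy]
  constructor <;> linarith [hexp.1, hexp.2]

lemma exists_lt_abs_windowCount_sub
    (h : ε * (q * k : ℕ) < |(windowCount g k s (q * k) a : ℝ) - (q * k : ℕ) / (g : ℝ) ^ k|) :
    ∃ r < k, ε * q < |(windowCount (g ^ k) 1 s q (a / g ^ r) : ℝ) - q / (g ^ k : ℕ)| := by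
  have hsum : ∑ _ ∈ range k, ε * q <
      ∑ r ∈ range k, |(windowCount (g ^ k) 1 s q (a / g ^ r) : ℝ) - q / (g ^ k : ℕ)| :=
    calc ∑ _ ∈ range k, ε * q = ε * (q * k : ℕ) := by
          rw [sum_const, card_range, nsmul_eq_mul, Nat.cast_mul]; ring
      _ < |(windowCount g k s (q * k) a : ℝ) - (q * k : ℕ) / (g : ℝ) ^ k| := h
      _ = |∑ r ∈ range k, ((windowCount (g ^ k) 1 s q (a / g ^ r) : ℝ) - q / (g ^ k : ℕ))| := by
          rw [windowCount_mul, sum_sub_distrib, sum_const, card_range, nsmul_eq_mul]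
          push_cast
          ring_nf
      _ ≤ _ := abs_sum_le_sum_abs _ _
  simpa only [mem_range] using exists_lt_of_sum_lt hsum

lemma card_filter_div_le (p : ℕ → Prop) [DecidablePred p] (N : ℕ) {d : ℕ} (hd : 0 < d) :
    #{a ∈ range N | p (a / d)} ≤ #{b ∈ range N | p b} * d := by
  suffices #{a ∈ range N | p (a / d)} ≤ #({b ∈ range N | p b} ×ˢ range d) by
    rwa [card_product, card_range] at this
  refine card_le_card_of_injOn (fun a => (a / d, a % d)) (fun a ha => ?_) fun a _ b _ hab => ?_
  · simp only [coe_filter, mem_range, Set.mem_ofPred_eq] at ha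
    simp [(Nat.div_le_self a d).trans_lt ha.1, ha.2, Nat.mod_lt a hd]
  · rw [Prod.mk.injEq] at hab
    rw [← Nat.div_add_mod a d, ← Nat.div_add_mod b d, hab.1, hab.2]

lemma card_exists_lt_abs_windowCount_sub_le (hg : 1 < g) (hs : s < g ^ k) (hε : 0 ≤ ε) :
    (#{a ∈ range ((g ^ k) ^ q) | ∃ r < k,
      ε * q < |(windowCount (g ^ k) 1 s q (a / g ^ r) : ℝ) - q / (g ^ k : ℕ)|} : ℝ) ≤
      k * (2 * ((g ^ k) ^ q * Real.exp (-(ε ^ 2 / 2) * q)) * g ^ k) := by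
  let rare (b : ℕ) : Prop := ε * q < |(windowCount (g ^ k) 1 s q b : ℝ) - q / (g ^ k : ℕ)|
  have hrare := card_lt_abs_windowCount_sub_le hs hε q
  rw [Nat.cast_pow] at hrare
  have hunion : #{a ∈ range ((g ^ k) ^ q) | ∃ r < k, rare (a / g ^ r)} ≤
      ∑ r ∈ range k, #{a ∈ range ((g ^ k) ^ q) | rare (a / g ^ r)} := by
    refine le_trans (card_le_card fun a ha => ?_) card_biUnion_le
    obtain ⟨haN, r, hr, hrare⟩ := by simpa only [mem_filter, mem_range] using ha
    exact mem_biUnion.2 ⟨r, mem_range.2 hr, mem_filter.2 ⟨mem_range.2 haN, hrare⟩⟩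
  calc (#{a ∈ range ((g ^ k) ^ q) | ∃ r < k, rare (a / g ^ r)} : ℝ)
      ≤ ∑ r ∈ range k, (#{a ∈ range ((g ^ k) ^ q) | rare (a / g ^ r)} : ℝ) := mod_cast hunion
    _ ≤ ∑ _ ∈ range k, (#{b ∈ range ((g ^ k) ^ q) | rare b} : ℝ) * g ^ k := by
        refine sum_le_sum fun r hr => ?_
        have hdiv := card_filter_div_le rare ((g ^ k) ^ q) (pow_pos (zero_lt_one.trans hg) r)
        have hpow := Nat.pow_le_pow_right hg.le (mem_range.1 hr).le
        exact mod_cast hdiv.trans (Nat.mul_le_mul_left _ hpow)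
    _ ≤ k * (2 * ((g ^ k) ^ q * Real.exp (-(ε ^ 2 / 2) * q)) * g ^ k) := by
        rw [sum_const, card_range, nsmul_eq_mul]
        gcongr
        exact mod_cast hrare

lemma exists_lt_abs_windowCount_sub_of_isAtypical (hg : 1 < g) (hσ : ∀ d ∈ σ, d < g) (hσ0 : σ ≠ [])
    (hε : 0 ≤ ε) (ha : IsAtypical g σ ε a) (hlo : (digs g a).length ≤ q * σ.length)
    (hhi : q * σ.length ≤ (digs g a).length + σ.length)
    (hlarge : 4 * σ.length + ε * σ.length ≤ ε * (digs g a).length) :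
    ∃ r < σ.length, ε / 2 * q <
      |(windowCount (g ^ σ.length) 1 (Nat.ofDigits g σ.reverse) q (a / g ^ r) : ℝ) -
        q / (g ^ σ.length : ℕ)| := by
  refine exists_lt_abs_windowCount_sub ?_
  have hclose := abs_discrepancy_digs_sub_le hg hσ hσ0 hlo hhi
  have hmul : ε * (q * σ.length : ℕ) ≤ ε * ((digs g a).length + σ.length) :=
    mul_le_mul_of_nonneg_left (mod_cast hhi) hε
  have htri := (abs_sub_abs_le_abs_sub _ _).trans hclose
  rw [IsAtypical] at ha
  linarith

lemma card_length_eq_isAtypical_le (hg : 1 < g) (hσ : ∀ d ∈ σ, d < g) (hσ0 : σ ≠ [])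
    (hε : 0 ≤ ε) {m : ℕ} (hm : 4 * σ.length + ε * σ.length ≤ ε * m) :
    (#{a ∈ range (g ^ m) | (digs g a).length = m ∧ IsAtypical g σ ε a} : ℝ) ≤
      2 * σ.length * g ^ (2 * σ.length) *
        (g * Real.exp (-(ε ^ 2 / (8 * σ.length)))) ^ m := by
  have hs : Nat.ofDigits g σ.reverse < g ^ σ.length := by
    simpa using Nat.ofDigits_lt_base_pow_length hg (l := σ.reverse) (by simpa using hσ)
  have hk : 0 < σ.length := List.length_pos_iff.2 hσ0
  set k := σ.length
  set s := Nat.ofDigits g σ.reverse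
  obtain ⟨q, hlo, hhi⟩ : ∃ q, m ≤ q * k ∧ q * k ≤ m + k :=
    ⟨m / k + 1, (Nat.lt_mul_of_div_lt (Nat.lt_succ_self _) hk).le,
      Nat.succ_mul _ k ▸ Nat.add_le_add_right (Nat.div_mul_le_self m k) k⟩
  have hsub : {a ∈ range (g ^ m) | (digs g a).length = m ∧ IsAtypical g σ ε a} ⊆
      {a ∈ range ((g ^ k) ^ q) | ∃ r < k, ε / 2 * q <
        |(windowCount (g ^ k) 1 s q (a / g ^ r) : ℝ) - q / (g ^ k : ℕ)|} := by
    intro a ha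
    obtain ⟨ham, rfl, hatyp⟩ := by simpa only [mem_filter, mem_range] using ha
    rw [mem_filter, mem_range, ← pow_mul, mul_comm k]
    exact ⟨ham.trans_le (Nat.pow_le_pow_right hg.le hlo),
      exists_lt_abs_windowCount_sub_of_isAtypical hg hσ hσ0 hε hatyp hlo hhi hm⟩
  have hexp : -((ε / 2) ^ 2 / 2) * q ≤ m * -(ε ^ 2 / (8 * k)) := by
    have hlo' : (m : ℝ) ≤ q * k := mod_cast hlo
    have hmk : (m : ℝ) / k ≤ q := (div_le_iff₀ (by positivity)).2 hlo'
    calc -((ε / 2) ^ 2 / 2) * q = -(ε ^ 2 / 8) * q := by ring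
      _ ≤ -(ε ^ 2 / 8) * (m / k) := mul_le_mul_of_nonpos_left hmk (by linarith [sq_nonneg ε])
      _ = m * -(ε ^ 2 / (8 * k)) := by ring
  calc (#{a ∈ range (g ^ m) | (digs g a).length = m ∧ IsAtypical g σ ε a} : ℝ)
      ≤ k * (2 * ((g ^ k) ^ q * Real.exp (-((ε / 2) ^ 2 / 2) * q)) * g ^ k) :=
        le_trans (mod_cast card_le_card hsub)
          (card_exists_lt_abs_windowCount_sub_le hg hs (by positivity))
    _ ≤ k * (2 * (g ^ (m + k) * Real.exp (m * -(ε ^ 2 / (8 * k)))) * g ^ k) := by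
        rw [← pow_mul, mul_comm k]
        have : (1 : ℝ) ≤ g := mod_cast hg.le
        gcongr
    _ = 2 * k * g ^ (2 * k) * (g * Real.exp (-(ε ^ 2 / (8 * k)))) ^ m := by
        rw [mul_pow, ← Real.exp_nat_mul]
        ring

lemma card_length_eq_isAtypical_isBigO (hg : 1 < g) (hσ : ∀ d ∈ σ, d < g) (hσ0 : σ ≠ [])
    (hε : 0 < ε) :
    (fun m => (#{a ∈ range (g ^ m) | (digs g a).length = m ∧ IsAtypical g σ ε a} : ℝ)) =O[atTop]
      fun m => (g * Real.exp (-(ε ^ 2 / (8 * σ.length)))) ^ m := by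
  refine .of_bound (2 * σ.length * g ^ (2 * σ.length)) ?_
  have hlarge : ∀ᶠ m : ℕ in atTop, 4 * σ.length + ε * σ.length ≤ ε * m :=
    (tendsto_natCast_atTop_atTop.const_mul_atTop hε).eventually_ge_atTop _
  filter_upwards [hlarge] with m hm
  rw [Real.norm_of_nonneg (by positivity), Real.norm_of_nonneg (by positivity)]
  exact card_length_eq_isAtypical_le hg hσ hσ0 hε.le hm

lemma exists_mul_exp_neg_le_rpow {x c : ℝ} (hx : 1 < x) (hc : 0 < c) :
    ∃ θ : ℝ, 0 < θ ∧ θ < 1 ∧ x * Real.exp (-c) ≤ x ^ θ := by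
  have hlog : 0 < Real.log x := Real.log_pos hx
  refine ⟨max (1 / 2) (1 - c / Real.log x), by positivity,
    max_lt (by norm_num) (sub_lt_self _ (by positivity)), ?_⟩
  calc x * Real.exp (-c) = x ^ (1 - c / Real.log x) := by
        rw [Real.rpow_def_of_pos (by positivity), mul_sub, mul_one,
          mul_div_cancel₀ _ hlog.ne', sub_eq_add_neg, Real.exp_add, Real.exp_log (by positivity)]
    _ ≤ x ^ max (1 / 2) (1 - c / Real.log x) :=
        Real.rpow_le_rpow_of_exponent_le hx.le (le_max_right _ _)

lemma count_le_sum_card_length_eq (hg : 1 < g) (p : ℕ → Prop) [DecidablePred p] (N : ℕ) :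
    Nat.count p N ≤
      ∑ m ∈ range ((digs g N).length + 1), #{a ∈ range (g ^ m) | (digs g a).length = m ∧ p a} := by
  rw [Nat.count_eq_card_filter_range]
  refine le_trans (card_le_card fun a ha => ?_) card_biUnion_le
  obtain ⟨haN, hpa⟩ := by simpa only [mem_filter, mem_range] using ha
  simp only [mem_biUnion, mem_filter, mem_range, length_digs]
  exact ⟨_, Nat.lt_succ_of_le (Nat.le_length_digits_le g a N haN.le),
    Nat.lt_base_pow_length_digits hg, rfl, hpa⟩

lemma count_isBigO_rpow_of_card_length_eq (hg : 1 < g) {p : ℕ → Prop} [DecidablePred p]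
    {θ : ℝ} (hθ : 0 < θ)
    (hp : (fun m => (#{a ∈ range (g ^ m) | (digs g a).length = m ∧ p a} : ℝ)) =O[atTop]
      fun m => ((g : ℝ) ^ θ) ^ m) :
    (fun N => (Nat.count p N : ℝ)) =O[atTop] fun N => (N : ℝ) ^ θ := by
  obtain ⟨C, hC, hbound⟩ := bound_of_isBigO_nat_atTop hp
  set ρ := (g : ℝ) ^ θ with hρ_def
  have hρ : 1 < ρ := Real.one_lt_rpow (mod_cast hg) hθ
  refine .of_bound (C * (ρ * ρ / (ρ - 1))) ?_
  filter_upwards [eventually_ne_atTop 0] with N hN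
  set L := (digs g N).length with hL
  have hpow : ρ ^ L ≤ ρ * (N : ℝ) ^ θ := by
    rw [hρ_def, ← Real.rpow_natCast, ← Real.rpow_mul (by positivity), mul_comm θ,
      Real.rpow_mul (by positivity), Real.rpow_natCast, ← Real.mul_rpow (by positivity)
      (by positivity), hL, length_digs]
    exact Real.rpow_le_rpow (by positivity)
      (mod_cast Nat.base_pow_length_digits_le g N hg hN) hθ.le
  rw [Real.norm_of_nonneg (by positivity), Real.norm_of_nonneg (by positivity)]
  calc (Nat.count p N : ℝ)
      ≤ ∑ m ∈ range (L + 1), (#{a ∈ range (g ^ m) | (digs g a).length = m ∧ p a} : ℝ) :=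
        mod_cast count_le_sum_card_length_eq hg p N
    _ ≤ ∑ m ∈ range (L + 1), C * ρ ^ m := by
        refine sum_le_sum fun m _ => ?_
        simpa [abs_of_pos (zero_lt_one.trans hρ)] using hbound (x := m) (by positivity)
    _ = C * ((ρ * ρ ^ L - 1) / (ρ - 1)) := by rw [← mul_sum, geom_sum_eq hρ.ne', pow_succ']
    _ ≤ C * (ρ * (ρ * N ^ θ) / (ρ - 1)) := by
        have : 0 < ρ - 1 := sub_pos.2 hρ
        gcongr
        linarith [mul_le_mul_of_nonneg_left hpow (zero_lt_one.trans hρ).le]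
    _ = C * (ρ * ρ / (ρ - 1)) * N ^ θ := by ring

theorem exists_count_isAtypical_isBigO_rpow (hg : 1 < g) (hσ : ∀ d ∈ σ, d < g) (hσ0 : σ ≠ [])
    (hε : 0 < ε) :
    ∃ θ : ℝ, θ < 1 ∧
      (fun N => (Nat.count (IsAtypical g σ ε) N : ℝ)) =O[atTop] fun N => (N : ℝ) ^ θ := by
  have hk : 0 < σ.length := List.length_pos_iff.2 hσ0
  obtain ⟨θ, hθ0, hθ1, hle⟩ := exists_mul_exp_neg_le_rpow (x := g)
    (c := ε ^ 2 / (8 * σ.length)) (mod_cast hg) (by positivity)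
  refine ⟨θ, hθ1, count_isBigO_rpow_of_card_length_eq hg hθ0
    ((card_length_eq_isAtypical_isBigO hg hσ hσ0 hε).trans (.of_bound' (.of_forall fun m => ?_)))⟩
  rw [Real.norm_of_nonneg (by positivity), Real.norm_of_nonneg (by positivity)]
  gcongr

end Atypical

section Dense

variable {g : ℕ} {σ : List ℕ}

lemma tendsto_length_digs_atTop (hg : 1 < g) :
    Tendsto (fun N => (digs g N).length) atTop atTop :=
  tendsto_atTop.2 fun b => by
    filter_upwards [eventually_ge_atTop (g ^ b)] with N hN
    rw [length_digs]
    exact ((Nat.lt_digits_length_iff hg N).2 hN).le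

lemma one_isLittleO_natCast_rpow {θ : ℝ} (hθ : 0 < θ) :
    (fun _ : ℕ => (1 : ℝ)) =o[atTop] fun N : ℕ => (N : ℝ) ^ θ :=
  (isLittleO_one_left_iff ℝ).2 <| tendsto_norm_atTop_atTop.comp <|
    (tendsto_rpow_atTop hθ).comp tendsto_natCast_atTop_atTop

lemma length_digs_isLittleO_rpow (hg : 1 < g) {θ : ℝ} (hθ : 0 < θ) :
    (fun N => ((digs g N).length : ℝ)) =o[atTop] fun N => (N : ℝ) ^ θ := by
  have hlog : (fun N : ℕ => Real.log N / Real.log g) =o[atTop] fun N => (N : ℝ) ^ θ := by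
    simpa only [div_eq_inv_mul, Function.comp_def] using
      ((isLittleO_log_rpow_atTop hθ).comp_tendsto tendsto_natCast_atTop_atTop).const_mul_left _
  refine (IsBigO.of_bound' ?_).trans_isLittleO (hlog.add (one_isLittleO_natCast_rpow hθ))
  filter_upwards [eventually_ne_atTop 0] with N hN
  rw [length_digs, Nat.length_digits g N hg hN, Real.norm_natCast, Nat.cast_succ]
  exact (add_le_add_left (Real.natLog_le_logb N g) 1).trans (le_abs_self _)

lemma sum_nth_le_sum_range {p B : ℕ → Prop} [DecidablePred B]
    (hp : (Set.ofPred p).Infinite) (f : ℕ → ℕ) (n : ℕ) :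
    ∑ j ∈ range n with B (Nat.nth p j), f (Nat.nth p j) ≤
      ∑ a ∈ range (Nat.nth p n) with B a, f a := by
  rw [← sum_image (g := Nat.nth p) (f := f) (Nat.nth_injective hp).injOn]
  refine sum_le_sum_of_subset fun a ha => ?_
  obtain ⟨j, hj, rfl⟩ := mem_image.1 ha
  rw [mem_filter, mem_range] at hj ⊢
  exact ⟨Nat.nth_strictMono hp hj.1, hj.2⟩

lemma sum_length_digs_le_length_mul_count (B : ℕ → Prop) [DecidablePred B] (g N : ℕ) :
    ∑ a ∈ range N with B a, (digs g a).length ≤ (digs g N).length * Nat.count B N := by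
  rw [Nat.count_eq_card_filter_range, mul_comm]
  refine sum_le_card_nsmul _ _ _ fun a ha => ?_
  rw [length_digs, length_digs]
  exact Nat.le_length_digits_le g a N (mem_range.1 (mem_filter.1 ha).1).le

/-- For every `θ < 1`, at least a constant times `N ^ θ` of the integers below `N` satisfy `p`:
the density hypothesis in the theorem of Copeland and Erdős. -/
def IsAlmostLinearlyDense (p : ℕ → Prop) [DecidablePred p] : Prop :=
  ∀ θ : ℝ, θ < 1 → (fun N : ℕ => (N : ℝ) ^ θ) =O[atTop] fun N => (Nat.count p N : ℝ)

variable {p : ℕ → Prop} [DecidablePred p]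

lemma IsAlmostLinearlyDense.infinite (hp : IsAlmostLinearlyDense p) : (Set.ofPred p).Infinite := by
  intro hfin
  have hbdd : (fun N => (Nat.count p N : ℝ)) =O[atTop] fun _ => (1 : ℝ) :=
    .of_bound (#hfin.toFinset : ℝ) <| .of_forall fun N => by simpa using Nat.count_le_card hfin N
  exact isLittleO_irrefl (.of_forall fun _ => one_ne_zero)
    ((one_isLittleO_natCast_rpow one_half_pos).trans_isBigO ((hp _ one_half_lt_one).trans hbdd))

lemma IsAlmostLinearlyDense.tendsto_nth_atTop (hp : IsAlmostLinearlyDense p) :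
    Tendsto (Nat.nth p) atTop atTop :=
  (Nat.nth_strictMono hp.infinite).tendsto_atTop

lemma IsAlmostLinearlyDense.rpow_nth_isBigO (hp : IsAlmostLinearlyDense p) {θ : ℝ} (hθ : θ < 1) :
    (fun n => (Nat.nth p n : ℝ) ^ θ) =O[atTop] fun n => (n : ℝ) := by
  simpa only [Function.comp_def, Nat.count_nth_of_infinite hp.infinite] using
    (hp θ hθ).comp_tendsto hp.tendsto_nth_atTop

lemma IsAlmostLinearlyDense.length_digs_nth_isLittleO (hp : IsAlmostLinearlyDense p)
    (hg : 1 < g) :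
    (fun n => ((digs g (Nat.nth p n)).length : ℝ)) =o[atTop] fun n => (n : ℝ) :=
  ((length_digs_isLittleO_rpow hg one_half_pos).comp_tendsto hp.tendsto_nth_atTop).trans_isBigO
    (hp.rpow_nth_isBigO one_half_lt_one)

lemma IsAlmostLinearlyDense.sum_length_digs_nth_isLittleO (hp : IsAlmostLinearlyDense p)
    (hg : 1 < g) {B : ℕ → Prop} [DecidablePred B] {θ : ℝ} (hθ : θ < 1)
    (hB : (fun N => (Nat.count B N : ℝ)) =O[atTop] fun N => (N : ℝ) ^ θ) :
    (fun n => ((∑ j ∈ range n with B (Nat.nth p j), (digs g (Nat.nth p j)).length : ℕ) : ℝ))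
      =o[atTop] fun n => (n : ℝ) := by
  obtain ⟨η, hθη, hη⟩ := exists_between hθ
  have hmul : (fun N => ((digs g N).length : ℝ) * Nat.count B N) =o[atTop]
      fun N => (N : ℝ) ^ η := by
    refine ((length_digs_isLittleO_rpow hg (sub_pos.2 hθη)).mul_isBigO hB).congr' .rfl ?_
    filter_upwards [eventually_gt_atTop 0] with N hN
    rw [← Real.rpow_add (mod_cast hN), sub_add_cancel]
  have hbound := (hmul.comp_tendsto hp.tendsto_nth_atTop).trans_isBigO (hp.rpow_nth_isBigO hη)
  refine (IsBigO.of_bound' <| .of_forall fun n => ?_).trans_isLittleO hbound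
  rw [Function.comp_apply, Real.norm_natCast, Real.norm_of_nonneg (by positivity)]
  exact mod_cast (sum_nth_le_sum_range hp.infinite _ n).trans
    (sum_length_digs_le_length_mul_count B g _)

lemma abs_discrepancy_digs_le (g : ℕ) (σ : List ℕ) {ε : ℝ} (hε : 0 ≤ ε) (a : ℕ) :
    |discrepancy g (digs g a) σ| ≤
      ε * (digs g a).length + if IsAtypical g σ ε a then ((digs g a).length : ℝ) else 0 := by
  split_ifs with ha
  · exact (abs_discrepancy_le_length _ _ _).trans (le_add_of_nonneg_left (by positivity))
  · simpa using not_lt.1 ha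

lemma IsAlmostLinearlyDense.sum_abs_discrepancy_isLittleO (hp : IsAlmostLinearlyDense p)
    (hg : 1 < g) (hσ : ∀ d ∈ σ, d < g) (hσ0 : σ ≠ [])
    (hcount : (fun n : ℕ => (n : ℝ)) =O[atTop]
      fun n => ((joinedWord (fun j => digs g (Nat.nth p j)) n).length : ℝ)) :
    (fun n => ∑ j ∈ range n, |discrepancy g (digs g (Nat.nth p j)) σ|) =o[atTop]
      fun n => ((joinedWord (fun j => digs g (Nat.nth p j)) n).length : ℝ) := by
  refine isLittleO_iff.2 fun c hc => ?_
  obtain ⟨θ, hθ, hrare⟩ := exists_count_isAtypical_isBigO_rpow hg hσ hσ0 (half_pos hc)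
  have hatyp := (hp.sum_length_digs_nth_isLittleO hg hθ hrare).trans_isBigO hcount
  filter_upwards [isLittleO_iff.1 hatyp (half_pos hc)] with n hn
  rw [Real.norm_natCast, Real.norm_natCast] at hn
  rw [Real.norm_of_nonneg (sum_nonneg fun _ _ => abs_nonneg _), Real.norm_natCast]
  calc ∑ j ∈ range n, |discrepancy g (digs g (Nat.nth p j)) σ|
      ≤ ∑ j ∈ range n, (c / 2 * (digs g (Nat.nth p j)).length +
          if IsAtypical g σ (c / 2) (Nat.nth p j) then ((digs g (Nat.nth p j)).length : ℝ)
          else 0) :=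
        sum_le_sum fun j _ => abs_discrepancy_digs_le g σ (half_pos hc).le _
    _ = c / 2 * (joinedWord (fun j => digs g (Nat.nth p j)) n).length +
          (∑ j ∈ range n with IsAtypical g σ (c / 2) (Nat.nth p j),
            (digs g (Nat.nth p j)).length : ℕ) := by
        rw [sum_add_distrib, ← mul_sum, length_joinedWord, sum_filter]
        push_cast
        rfl
    _ ≤ c * (joinedWord (fun j => digs g (Nat.nth p j)) n).length := by linarith

theorem copeland_erdos_number_normal_general (hg : 1 < g) (hp0 : ¬ p 0)
    (hp : IsAlmostLinearlyDense p) :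
    IsNormalSeq g (concatDigit g fun n => Nat.nth p (n - 1)) := by
  intro σ hσ0 hσ
  rw [concatDigit_eq_joinedStream]
  let w (n : ℕ) : List ℕ := digs g (Nat.nth p n)
  have hw (n : ℕ) : w n ≠ [] := by
    have hne : Nat.nth p n ≠ 0 := fun h => hp0 (h ▸ Nat.nth_mem_of_infinite hp.infinite n)
    simpa [w, digs, Nat.digits_eq_nil_iff_eq_zero] using hne
  have hlen : Tendsto (fun n => (w n).length) atTop atTop :=
    (tendsto_length_digs_atTop hg).comp hp.tendsto_nth_atTop
  have hcount := (isLittleO_natCast_length_joinedWord hw hlen).isBigO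
  exact tendsto_nu_div_of_discrepancy_isLittleO <| discrepancy_joinedStream_isLittleO hw hlen
    ((hp.length_digs_nth_isLittleO hg).trans_isBigO hcount)
    (hp.sum_abs_discrepancy_isLittleO hg hσ hσ0 hcount)

end Dense

section Primes

lemma natCast_isBigO_psi : (fun N : ℕ => (N : ℝ)) =O[atTop] fun N : ℕ => Chebyshev.psi N := by
  have hscale : (fun N : ℕ => (N : ℝ)) =O[atTop] fun N => Real.log 2 * N :=
    (isBigO_refl _ _).const_mul_right (Real.log_pos one_lt_two).ne'
  have hsucc : (fun N : ℕ => (N : ℝ) + 1) =O[atTop] fun N => (N : ℝ) :=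
    (isBigO_refl _ _).add <| .of_bound' <| by
      filter_upwards [eventually_ge_atTop 1] with N hN
      simpa using hN
  have hlog : (fun N : ℕ => Real.log (N + 1)) =o[atTop] fun N => Real.log 2 * N :=
    ((Real.isLittleO_log_id_atTop.comp_tendsto
      (tendsto_atTop_add_const_right atTop 1 tendsto_natCast_atTop_atTop)).trans_isBigO
      hsucc).trans_isBigO hscale
  refine hscale.trans (hlog.right_isBigO_sub.trans (.of_bound' ?_))
  filter_upwards [hlog.bound one_pos] with N hN
  rw [one_mul, Real.norm_of_nonneg (Real.log_nonneg (by simp)),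
    Real.norm_of_nonneg (mul_nonneg (Real.log_nonneg one_le_two) N.cast_nonneg)] at hN
  rw [Real.norm_of_nonneg (sub_nonneg.2 hN), mul_comm]
  exact (Chebyshev.psi_ge N).trans (le_abs_self _)

lemma primeCounting_isBigO_count_prime :
    (fun N => (Nat.primeCounting N : ℝ)) =O[atTop] fun N => (Nat.count Nat.Prime N : ℝ) := by
  refine .of_bound 2 ?_
  filter_upwards [Nat.tendsto_primeCounting'.eventually_ge_atTop 1] with N hN
  rw [Real.norm_natCast, Real.norm_natCast]
  have hsucc : Nat.primeCounting N ≤ Nat.count Nat.Prime N + 1 := by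
    rw [Nat.primeCounting, Nat.primeCounting', Nat.count_succ]
    split_ifs <;> lia
  rw [Nat.primeCounting'] at hN
  exact mod_cast (by lia : Nat.primeCounting N ≤ 2 * Nat.count Nat.Prime N)

theorem isAlmostLinearlyDense_prime : IsAlmostLinearlyDense Nat.Prime := by
  intro θ hθ
  have hlog : (fun N : ℕ => Real.log N) =O[atTop] fun N => (N : ℝ) ^ (1 - θ) :=
    ((isLittleO_log_rpow_atTop (sub_pos.2 hθ)).comp_tendsto tendsto_natCast_atTop_atTop).isBigO
  have hpsi : (fun N : ℕ => Chebyshev.psi N) =O[atTop]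
      fun N => (Nat.primeCounting N : ℝ) * Real.log N :=
    .of_bound' <| .of_forall fun N => by
      rw [Real.norm_of_nonneg (Chebyshev.psi_nonneg _)]
      exact (Chebyshev.psi_le_primeCounting_mul_log N).trans (le_abs_self _)
  have hmul := ((natCast_isBigO_psi.trans hpsi).trans
    (primeCounting_isBigO_count_prime.mul hlog)).mul
    (isBigO_refl (fun N : ℕ => (N : ℝ) ^ (θ - 1)) atTop)
  refine hmul.congr' ?_ ?_ <;> filter_upwards [eventually_gt_atTop 0] with N hN
  · have hN' : (0 : ℝ) < N := mod_cast hN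
    rw [Real.rpow_sub_one hN'.ne', mul_div_cancel₀ _ hN'.ne']
  · rw [mul_assoc, ← Real.rpow_add (mod_cast hN)]
    simp

end Primes

/-- The Copeland–Erdős number `0.2357111317…`, formed by concatenating the decimal
expansions of the primes in increasing order, is normal to base `10`.
(Here `a n = Nat.nth Nat.Prime (n - 1)` is the `n`-th prime: `a 1 = 2`, `a 2 = 3`, ….) -/
theorem copeland_erdos_number_normal :
    IsNormalSeq 10 (concatDigit 10 fun n => Nat.nth Nat.Prime (n - 1)) :=
  copeland_erdos_number_normal_general (by norm_num) Nat.not_prime_zero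
    isAlmostLinearlyDense_prime
end

section
/- Fix an integer base g ≥ 2, a real ε > 0, and k ∈ ℕ. Then the number of integers n in [1, m] for which n² is not (ε,k)-normal to base g is o(m) as m → ∞. -/
open Filter Asymptotics

/-- `L(a) = ⌊log_g a⌋ + 1`, the number of base-`g` digits of `a ≥ 1`. -/
def Lg (g a : ℕ) : ℕ :=
  Nat.log g a + 1

/-- A positive integer `a` is `(ε,k)`-normal to base `g` if every string `σ` of `k`
base-`g` digits satisfies `|ν(a,σ)/L(a) − g^{−k}| ≤ ε`. -/
def EKNormalInt (g : ℕ) (ε : ℝ) (k : ℕ) (a : ℕ) : Prop :=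
  ∀ σ : List ℕ, σ.length = k → (∀ d ∈ σ, d < g) →
    |(nu (digs g a) σ : ℝ) / (Lg g a : ℝ) - 1 / (g : ℝ) ^ k| ≤ ε

/-!
By geometric summation it is enough to treat the `n` in one block `[g ^ M, g ^ (M + 1))`, whose
squares have `2 * M + O(1)` digits; cut these into a low half `n ^ 2 mod g ^ (M + O(1))` and a high
half `n ^ 2 / g ^ M`. A variance estimate (digit blocks at positions at least `k` apart are
uncorrelated) and Chebyshev's inequality show that all but `O(g ^ M / M)` of the possible halves
have the right number of occurrences of every string of length `k`.

It remains to see that few `n` share a half. The high half determines `n`, since consecutive squares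
in the block differ by more than `g ^ M`. The low half determines `n` up to `O_s(1)` choices as soon
as no `p ^ s` with `p` a prime factor of `g` divides `n`; this fails only for a proportion
`O(2 ^ (-s))` of the `n`, and `s` is arbitrary.
-/

section FiniteSums

open Finset

lemma sum_range_mul_mod_mul_div {R : Type*} [CommSemiring R] (f h : ℕ → R) (A B : ℕ) :
    ∑ b ∈ range (A * B), f (b % B) * h (b / B) = (∑ r ∈ range B, f r) * ∑ q ∈ range A, h q := by
  induction A with
  | zero => simp
  | succ A ih =>
    rw [Nat.succ_mul, sum_range_add, ih, sum_range_succ, mul_add, sum_mul _ _ (h A)]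
    refine congrArg _ (sum_congr rfl fun r hr => ?_)
    have hrB : r < B := mem_range.1 hr
    rw [Nat.mul_add_mod', Nat.mod_eq_of_lt hrB, Nat.add_div_of_dvd_right (dvd_mul_left B A),
      Nat.mul_div_cancel _ (by lia), Nat.div_eq_of_lt hrB, add_zero]

lemma card_filter_lt_abs_mul_sq_le {α : Type*} (S : Finset α) (f : α → ℝ) {t : ℝ} (ht : 0 ≤ t) :
    (#{b ∈ S | t < |f b|} : ℝ) * t ^ 2 ≤ ∑ b ∈ S, f b ^ 2 := by
  calc (#{b ∈ S | t < |f b|} : ℝ) * t ^ 2 = ∑ b ∈ S with t < |f b|, t ^ 2 := by simp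
    _ ≤ ∑ b ∈ S with t < |f b|, f b ^ 2 := sum_le_sum fun b hb => by
        rw [← sq_abs (f b)]
        exact pow_le_pow_left₀ ht (mem_filter.1 hb).2.le 2
    _ ≤ ∑ b ∈ S, f b ^ 2 :=
        sum_le_sum_of_subset_of_nonneg (filter_subset _ _) fun _ _ _ => sq_nonneg _

lemma sum_sq_sum_range_le_of_orthogonal {α : Type*} (S : Finset α) (X : ℕ → α → ℝ) (k N : ℕ)
    (hX : ∀ i, ∀ b ∈ S, |X i b| ≤ 1)
    (horth : ∀ i j, i + k ≤ j → j < N → ∑ b ∈ S, X i b * X j b = 0) :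
    ∑ b ∈ S, (∑ i ∈ range N, X i b) ^ 2 ≤ N * (2 * k) * #S := by
  have sum_mul_le_card (i j : ℕ) : ∑ b ∈ S, X i b * X j b ≤ #S := by
    rw [← nsmul_one (#S)]
    refine sum_le_card_nsmul _ _ _ fun b hb => (le_abs_self _).trans ?_
    rw [abs_mul]
    exact mul_le_one₀ (hX i b hb) (abs_nonneg _) (hX j b hb)
  have near_diagonal (i j : ℕ) (hi : i < N) (hj : j < N) :
      ∑ b ∈ S, X i b * X j b ≤ if j ∈ Ico (i - k) (i + k) then (#S : ℝ) else 0 := by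
    split_ifs with hij
    · exact sum_mul_le_card i j
    · rw [mem_Ico, not_and_or, not_le, not_lt] at hij
      rcases hij with hji | hij
      · simp only [mul_comm (X i _)]
        exact (horth j i (by lia) hi).le
      · exact (horth i j hij hj).le
  have row_le (i : ℕ) (hi : i < N) :
      ∑ j ∈ range N, ∑ b ∈ S, X i b * X j b ≤ 2 * k * #S := by
    calc ∑ j ∈ range N, ∑ b ∈ S, X i b * X j b
        ≤ ∑ j ∈ range N, if j ∈ Ico (i - k) (i + k) then (#S : ℝ) else 0 :=
          sum_le_sum fun j hj => near_diagonal i j hi (mem_range.1 hj)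
      _ = #(range N ∩ Ico (i - k) (i + k)) * (#S : ℝ) := by rw [sum_ite_mem]; simp
      _ ≤ 2 * k * #S := by
          gcongr
          have hcard : #(range N ∩ Ico (i - k) (i + k)) ≤ 2 * k :=
            (card_le_card inter_subset_right).trans (by rw [Nat.card_Ico]; lia)
          exact_mod_cast hcard
  calc ∑ b ∈ S, (∑ i ∈ range N, X i b) ^ 2
      = ∑ i ∈ range N, ∑ j ∈ range N, ∑ b ∈ S, X i b * X j b := by
        simp only [sq, sum_mul_sum]
        rw [sum_comm]
        exact sum_congr rfl fun i _ => sum_comm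
    _ ≤ ∑ _i ∈ range N, 2 * (k : ℝ) * #S := sum_le_sum fun i hi => row_le i (mem_range.1 hi)
    _ = N * (2 * k) * #S := by rw [sum_const, card_range, nsmul_eq_mul, mul_assoc (N : ℝ)]

end FiniteSums

section GeometricBlocks

open Finset

lemma tendsto_natLog_atTop {g : ℕ} (hg : 1 < g) : Tendsto (Nat.log g) atTop atTop :=
  tendsto_atTop.2 fun b =>
    (eventually_ge_atTop (g ^ b)).mono fun _ hm => Nat.le_log_of_pow_le hg hm

lemma sum_range_log_succ_pow_le {g m : ℕ} (hg : 1 < g) (hm : m ≠ 0) :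
    ∑ M ∈ range (Nat.log g m + 1), g ^ M ≤ g * m :=
  calc ∑ M ∈ range (Nat.log g m + 1), g ^ M
      ≤ g ^ (Nat.log g m + 1) := (Nat.geomSum_lt hg fun _ hM => mem_range.1 hM).le
    _ = g * g ^ Nat.log g m := pow_succ' _ _
    _ ≤ g * m := Nat.mul_le_mul_left g (Nat.pow_log_le_self g hm)

lemma card_filter_Icc_le_sum_card_filter_Ico_pow {g : ℕ} (hg : 1 < g) (P : ℕ → Prop)
    [DecidablePred P] (m : ℕ) :
    #{n ∈ Icc 1 m | P n} ≤
      ∑ M ∈ range (Nat.log g m + 1), #{n ∈ Ico (g ^ M) (g ^ (M + 1)) | P n} := by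
  refine (card_le_card fun n hn => ?_).trans card_biUnion_le
  obtain ⟨hn, hP⟩ := mem_filter.1 hn
  obtain ⟨hn1, hnm⟩ := mem_Icc.1 hn
  rw [mem_biUnion]
  exact ⟨Nat.log g n, mem_range.2 (Nat.lt_succ_of_le (Nat.log_mono_right hnm)), mem_filter.2
    ⟨mem_Ico.2 ⟨Nat.pow_log_le_self g (by lia), Nat.lt_pow_succ_log_self hg n⟩, hP⟩⟩

lemma isLittleO_card_filter_Icc_of_Ico_pow {g : ℕ} (hg : 1 < g) (P : ℕ → Prop) [DecidablePred P]
    (h : (fun M : ℕ => (#{n ∈ Ico (g ^ M) (g ^ (M + 1)) | P n} : ℝ))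
      =o[atTop] fun M : ℕ => (g : ℝ) ^ M) :
    (fun m : ℕ => (#{n ∈ Icc 1 m | P n} : ℝ)) =o[atTop] fun m : ℕ => (m : ℝ) := by
  have hg1 : (1 : ℝ) < g := by exact_mod_cast hg
  have geom_tendsto : Tendsto (fun N => ∑ M ∈ range N, (g : ℝ) ^ M) atTop atTop :=
    tendsto_atTop_mono (fun N => by
      simpa using (card_nsmul_le_sum (range N) _ (1 : ℝ) fun M _ => one_le_pow₀ hg1.le))
      tendsto_natCast_atTop_atTop
  have block_sums_isLittleO :
      (fun m : ℕ => ∑ M ∈ range (Nat.log g m + 1), (#{n ∈ Ico (g ^ M) (g ^ (M + 1)) | P n} : ℝ))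
        =o[atTop] fun m : ℕ => ∑ M ∈ range (Nat.log g m + 1), (g : ℝ) ^ M :=
    (h.sum_range (fun M => by positivity) geom_tendsto).comp_tendsto
      ((tendsto_add_atTop_nat 1).comp (tendsto_natLog_atTop hg))
  refine (IsBigO.of_bound 1 (.of_forall fun m => ?_)).trans_isLittleO
    (block_sums_isLittleO.trans_isBigO (IsBigO.of_bound g ?_))
  · rw [one_mul, Real.norm_natCast]
    refine le_trans ?_ (le_abs_self _)
    exact_mod_cast card_filter_Icc_le_sum_card_filter_Ico_pow hg P m
  · filter_upwards [eventually_ne_atTop 0] with m hm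
    rw [Real.norm_of_nonneg (sum_nonneg fun M _ => by positivity), Real.norm_natCast]
    exact_mod_cast sum_range_log_succ_pow_le hg hm

end GeometricBlocks

section DigitBlocks

open Finset

/-- The number spelled by the `k` base-`g` digits of `a` at positions `j, …, j + k - 1`, position
`0` being the least significant one; `a` is padded with leading zeros. -/
def digitBlock (g k j a : ℕ) : ℕ :=
  a / g ^ j % g ^ k

/-- The centred indicator of the event that the `k` digits of `a` from position `j` spell `v`. -/
noncomputable def blockDeviation (g k v j a : ℕ) : ℝ :=
  (if digitBlock g k j a = v then 1 else 0) - 1 / (g : ℝ) ^ k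

/-- The number of positions `j < N` at which the `k`-digit block of `a` spells `v`, minus the
expected number `N / g ^ k`. -/
noncomputable def blockDiscrepancy (g k v N a : ℕ) : ℝ :=
  ∑ j ∈ range N, blockDeviation g k v j a

/-- The `a < g ^ R` whose number of blocks `v` at the lowest `N` positions is off by more than
`δ * N`: the exceptional set of Chebyshev's inequality. -/
noncomputable def discrepantNumbers (g k v N R : ℕ) (δ : ℝ) : Finset ℕ :=
  {a ∈ range (g ^ R) | δ * N < |blockDiscrepancy g k v N a|}

variable {g k v : ℕ}

lemma digitBlock_div_pow (i j a : ℕ) : digitBlock g k j (a / g ^ i) = digitBlock g k (i + j) a := by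
  rw [digitBlock, digitBlock, Nat.div_div_eq_div_mul, pow_add]

lemma digitBlock_mod_pow {j R : ℕ} (h : j + k ≤ R) (a : ℕ) :
    digitBlock g k j (a % g ^ R) = digitBlock g k j a := by
  rw [digitBlock, digitBlock, ← Nat.mod_mul_right_div_self, ← Nat.mod_mul_right_div_self (m := a),
    ← pow_add, Nat.mod_mod_of_dvd _ (pow_dvd_pow g h)]

lemma abs_blockDeviation_le_one (hg : 0 < g) (j a : ℕ) : |blockDeviation g k v j a| ≤ 1 := by
  have hpow : (1 : ℝ) ≤ (g : ℝ) ^ k := one_le_pow₀ (by exact_mod_cast hg)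
  have hle : 1 / (g : ℝ) ^ k ≤ 1 := div_le_one_of_le₀ hpow (by positivity)
  have hnonneg : 0 ≤ 1 / (g : ℝ) ^ k := by positivity
  rw [blockDeviation, abs_le]
  split_ifs <;> constructor <;> linarith

lemma sum_blockDeviation_zero_eq_zero (hv : v < g ^ k) (A : ℕ) :
    ∑ q ∈ range (A * g ^ k), blockDeviation g k v 0 q = 0 := by
  have sum_one_period : ∑ r ∈ range (g ^ k), blockDeviation g k v 0 r = 0 := by
    have hblock : ∀ r ∈ range (g ^ k),
        blockDeviation g k v 0 r = (if r = v then 1 else 0) - 1 / (g : ℝ) ^ k := fun r hr => by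
      rw [blockDeviation, digitBlock, pow_zero, Nat.div_one, Nat.mod_eq_of_lt (mem_range.1 hr)]
    have hpow : (g : ℝ) ^ k ≠ 0 := by exact_mod_cast (show g ^ k ≠ 0 by lia)
    rw [sum_congr rfl hblock, sum_sub_distrib]
    simp [hv, hpow]
  have hperiodic (q : ℕ) : blockDeviation g k v 0 q = blockDeviation g k v 0 (q % g ^ k) * 1 := by
    rw [mul_one, blockDeviation, blockDeviation, digitBlock_mod_pow (by lia)]
  rw [sum_congr rfl fun q _ => hperiodic q, sum_range_mul_mod_mul_div _ (fun _ => 1),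
    sum_one_period, zero_mul]

lemma sum_blockDeviation_mul_blockDeviation_eq_zero {i j R : ℕ} (hv : v < g ^ k) (hij : i + k ≤ j)
    (hjR : j + k ≤ R) :
    ∑ b ∈ range (g ^ R), blockDeviation g k v i b * blockDeviation g k v j b = 0 := by
  have hsplit (b : ℕ) : blockDeviation g k v i b * blockDeviation g k v j b =
      blockDeviation g k v i (b % g ^ j) * blockDeviation g k v 0 (b / g ^ j) := by
    simp only [blockDeviation, digitBlock_div_pow, digitBlock_mod_pow hij, add_zero]
  have hpow : g ^ R = g ^ (R - j - k) * g ^ k * g ^ j := by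
    rw [← pow_add, ← pow_add]
    congr 1
    lia
  simp_rw [hsplit]
  rw [hpow, sum_range_mul_mod_mul_div, sum_blockDeviation_zero_eq_zero hv, mul_zero]

lemma natCast_count_digitBlock (N a : ℕ) :
    (Nat.count (fun j => digitBlock g k j a = v) N : ℝ) =
      blockDiscrepancy g k v N a + N / (g : ℝ) ^ k := by
  simp [blockDiscrepancy, blockDeviation, Nat.count_eq_card_filter_range, div_eq_mul_inv]

lemma blockDiscrepancy_add (N N' a : ℕ) :
    blockDiscrepancy g k v (N + N') a =
      blockDiscrepancy g k v N a + blockDiscrepancy g k v N' (a / g ^ N) := by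
  simp only [blockDiscrepancy, sum_range_add, blockDeviation, digitBlock_div_pow]

lemma blockDiscrepancy_mod_pow {N R : ℕ} (h : N + k ≤ R) (a : ℕ) :
    blockDiscrepancy g k v N (a % g ^ R) = blockDiscrepancy g k v N a :=
  sum_congr rfl fun j hj => by
    have hjN := mem_range.1 hj
    rw [blockDeviation, blockDeviation, digitBlock_mod_pow (by lia)]

lemma abs_blockDiscrepancy_le (hg : 0 < g) (N a : ℕ) : |blockDiscrepancy g k v N a| ≤ N := by
  calc |blockDiscrepancy g k v N a| ≤ ∑ j ∈ range N, |blockDeviation g k v j a| :=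
        abs_sum_le_sum_abs _ _
    _ ≤ N := by
        simpa using sum_le_card_nsmul (range N) _ 1 fun j _ => abs_blockDeviation_le_one hg j a

lemma card_discrepantNumbers_le (hg : 0 < g) (hv : v < g ^ k) {N R : ℕ} (hN : 0 < N)
    (hR : N + k ≤ R) {δ : ℝ} (hδ : 0 < δ) :
    (#(discrepantNumbers g k v N R δ) : ℝ) ≤ 2 * k * (g : ℝ) ^ R / (δ ^ 2 * N) := by
  have variance_le : ∑ b ∈ range (g ^ R), blockDiscrepancy g k v N b ^ 2 ≤
      N * (2 * k) * (g : ℝ) ^ R := by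
    simpa [blockDiscrepancy] using sum_sq_sum_range_le_of_orthogonal (range (g ^ R))
      (blockDeviation g k v) k N (fun i b _ => abs_blockDeviation_le_one hg i b)
      (fun i j hij hj => sum_blockDeviation_mul_blockDeviation_eq_zero hv hij (by lia))
  have chebyshev : (#(discrepantNumbers g k v N R δ) : ℝ) * (δ * N) ^ 2 ≤
      N * (2 * k) * (g : ℝ) ^ R :=
    (card_filter_lt_abs_mul_sq_le _ _ (by positivity)).trans variance_le
  have hN' : (0 : ℝ) < N := by exact_mod_cast hN
  rw [le_div_iff₀ (by positivity)]
  refine le_of_mul_le_mul_right ?_ hN'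
  linarith

end DigitBlocks

section Strings

lemma take_drop_digits_eq_iff_digitBlock_eq {g : ℕ} (hg : 2 ≤ g) {a j : ℕ} {τ : List ℕ}
    (hτ : ∀ d ∈ τ, d < g) (hj : j + τ.length ≤ (Nat.digits g a).length) :
    ((Nat.digits g a).drop j).take τ.length = τ ↔
      digitBlock g τ.length j a = Nat.ofDigits g τ := by
  have digits_lt : ∀ d ∈ (Nat.digits g a).drop j, d < g := fun d hd =>
    Nat.digits_lt_base (by lia) (List.mem_of_mem_drop hd)
  rw [digitBlock, Nat.self_div_pow_eq_ofDigits_drop _ _ hg,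
    Nat.ofDigits_mod_pow_eq_ofDigits_take _ (by lia) _ digits_lt]
  refine ⟨congrArg _, Nat.ofDigits_inj_of_len_eq (by lia) ?_
    (fun d hd => digits_lt d (List.mem_of_mem_take hd)) hτ⟩
  rw [List.length_take, List.length_drop]
  lia

lemma isPrefix_drop_reverse_iff {α : Type*} {σ D : List α} {i : ℕ}
    (hi : i + σ.length ≤ D.length) :
    σ <+: D.reverse.drop i ↔
      (D.drop (D.length - σ.length - i)).take σ.reverse.length = σ.reverse := by
  rw [List.drop_reverse, ← List.reverse_suffix, List.reverse_reverse, List.suffix_iff_eq_drop,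
    List.drop_take, List.length_take, eq_comm]
  have hstart : min (D.length - i) D.length - σ.reverse.length = D.length - σ.length - i := by
    rw [List.length_reverse]
    lia
  have hlength : D.length - i - (D.length - σ.length - i) = σ.reverse.length := by
    rw [List.length_reverse]
    lia
  rw [hstart, hlength]

lemma isPrefix_drop_digs_iff {g : ℕ} (hg : 2 ≤ g) {a i : ℕ} {σ : List ℕ} (hlt : ∀ d ∈ σ, d < g)
    (hi : i < (Nat.digits g a).length) :
    σ <+: (digs g a).drop i ↔ i + σ.length ≤ (Nat.digits g a).length ∧
      digitBlock g σ.length ((Nat.digits g a).length - σ.length - i) a =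
        Nat.ofDigits g σ.reverse := by
  have fits_of_isPrefix (h : σ <+: (digs g a).drop i) :
      i + σ.length ≤ (Nat.digits g a).length := by
    have hle := h.length_le
    rw [digs, List.length_drop, List.length_reverse] at hle
    lia
  rw [← and_iff_right_of_imp fits_of_isPrefix]
  refine and_congr_right fun hfits => ?_
  rw [digs, isPrefix_drop_reverse_iff hfits, take_drop_digits_eq_iff_digitBlock_eq hg
    (fun d hd => hlt d (List.mem_reverse.1 hd)) (by rw [List.length_reverse]; lia),
    List.length_reverse]

lemma nu_digs_eq_count {g : ℕ} (hg : 2 ≤ g) (a : ℕ) {σ : List ℕ} (hσ : σ ≠ [])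
    (hlt : ∀ d ∈ σ, d < g) :
    nu (digs g a) σ =
      Nat.count (fun j => digitBlock g σ.length j a = Nat.ofDigits g σ.reverse)
        ((Nat.digits g a).length + 1 - σ.length) := by
  have hσ' : 0 < σ.length := List.length_pos_iff.2 hσ
  have hlength : (digs g a).length = (Nat.digits g a).length := List.length_reverse
  rw [nu, Nat.count_eq_card_filter_range, hlength, Finset.filter_congr fun i hi =>
    isPrefix_drop_digs_iff hg hlt (Finset.mem_range.1 hi)]
  set L := (Nat.digits g a).length
  have reflect {j : ℕ} (hj : j + σ.length ≤ L) : L - σ.length - (L - σ.length - j) = j := by lia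
  refine Finset.card_nbij' (L - σ.length - ·) (L - σ.length - ·) ?_ ?_ ?_ ?_ <;>
    intro i hi <;> simp only [Finset.coe_filter, Finset.mem_range, Set.mem_ofPred_eq] at hi ⊢
  · exact ⟨by lia, hi.2.2⟩
  · rw [reflect (by lia)]
    exact ⟨by lia, by lia, hi.2⟩
  · exact reflect hi.2.1
  · exact reflect (by lia)

lemma nu_digs_nil (g a : ℕ) : nu (digs g a) [] = (Nat.digits g a).length := by
  simp [nu, digs]

lemma abs_nu_digs_sub_count_le {g : ℕ} (hg : 2 ≤ g) (a : ℕ) {σ : List ℕ} (hlt : ∀ d ∈ σ, d < g) :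
    |(nu (digs g a) σ : ℝ) -
      Nat.count (fun j => digitBlock g σ.length j a = Nat.ofDigits g σ.reverse)
        (Nat.digits g a).length| ≤ σ.length := by
  rcases eq_or_ne σ [] with rfl | hσ
  · simp [nu_digs_nil, digitBlock, Nat.mod_one]
  · have hσ' : 0 < σ.length := List.length_pos_iff.2 hσ
    set p := fun j => digitBlock g σ.length j a = Nat.ofDigits g σ.reverse
    set L := (Nat.digits g a).length
    have hnu : nu (digs g a) σ = Nat.count p (L + 1 - σ.length) := nu_digs_eq_count hg a hσ hlt
    have hle : Nat.count p (L + 1 - σ.length) ≤ Nat.count p L := Nat.count_monotone p (by lia)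
    have hge : Nat.count p L ≤ Nat.count p (L + 1 - σ.length) + σ.length := by
      obtain ⟨d, hd⟩ := Nat.exists_eq_add_of_le (show L + 1 - σ.length ≤ L by lia)
      have hcount := Nat.count_add p (L + 1 - σ.length) d
      have hcount_le := Nat.count_le (p := fun j => p (L + 1 - σ.length + j)) (n := d)
      rw [← hd] at hcount
      lia
    rw [hnu, abs_sub_comm, abs_of_nonneg (by rw [sub_nonneg]; exact_mod_cast hle),
      sub_le_iff_le_add']
    exact_mod_cast hge

lemma EKNormalInt.of_abs_blockDiscrepancy_le {g k a : ℕ} {ε : ℝ} (hg : 2 ≤ g) (ha : a ≠ 0)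
    (h : ∀ v < g ^ k, |blockDiscrepancy g k v (Lg g a) a| + k ≤ ε * Lg g a) :
    EKNormalInt g ε k a := by
  rintro σ rfl hlt
  set v := Nat.ofDigits g σ.reverse with hv_def
  have hv : v < g ^ σ.length := by
    simpa using Nat.ofDigits_lt_base_pow_length (b := g) (l := σ.reverse) (by lia)
      (by simpa using hlt)
  have hlength : (Nat.digits g a).length = Lg g a := Nat.length_digits g a (by lia) ha
  have hcount := abs_nu_digs_sub_count_le hg a hlt
  rw [hlength, natCast_count_digitBlock, ← hv_def] at hcount
  have hL : (0 : ℝ) < Lg g a := by exact_mod_cast Nat.succ_pos _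
  have hdiv : (nu (digs g a) σ : ℝ) / Lg g a - 1 / (g : ℝ) ^ σ.length =
      (nu (digs g a) σ - Lg g a / (g : ℝ) ^ σ.length) / Lg g a := by
    field_simp
  rw [hdiv, abs_div, abs_of_pos hL, div_le_iff₀ hL]
  calc |(nu (digs g a) σ : ℝ) - Lg g a / (g : ℝ) ^ σ.length|
      = |(nu (digs g a) σ - (blockDiscrepancy g σ.length v (Lg g a) a +
          Lg g a / (g : ℝ) ^ σ.length)) + blockDiscrepancy g σ.length v (Lg g a) a| := by
        congr 1
        ring
    _ ≤ σ.length + |blockDiscrepancy g σ.length v (Lg g a) a| :=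
        (abs_add_le _ _).trans (by gcongr)
    _ ≤ ε * Lg g a := by linarith [h v hv]

end Strings

section PrimePowFree

open Finset

/-- No prime factor of `g` divides `n` to the power `s`; for large `s` this fails only for a small
proportion of the `n`. -/
def PrimePowFree (g s n : ℕ) : Prop :=
  ∀ p, p.Prime → p ∣ g → ¬ p ^ s ∣ n

variable {g s n n' : ℕ}

lemma PrimePowFree.gcd_pow_dvd_pow (hn : PrimePowFree g s n) (M : ℕ) :
    Nat.gcd (g ^ M) n ∣ g ^ s := by
  rw [Nat.dvd_iff_prime_pow_dvd_dvd]
  intro p l hp hl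
  rcases eq_or_ne l 0 with rfl | hl0
  · simp
  have hpg : p ∣ g :=
    hp.dvd_of_dvd_pow ((dvd_pow_self p hl0).trans (hl.trans (Nat.gcd_dvd_left _ _)))
  have hls : l ≤ s := by
    by_contra! hsl
    exact hn p hp hpg ((pow_dvd_pow p hsl.le).trans (hl.trans (Nat.gcd_dvd_right _ _)))
  exact (pow_dvd_pow p hls).trans (pow_dvd_pow_of_dvd hpg s)

lemma PrimePowFree.succ_two_mul (hn : PrimePowFree g s n) : PrimePowFree g (s + 1) (2 * n) := by
  intro p hp hpg hdvd
  refine hn p hp hpg ?_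
  rcases eq_or_ne p 2 with rfl | hp2
  · rw [pow_succ'] at hdvd
    exact Nat.dvd_of_mul_dvd_mul_left two_pos hdvd
  · have hcop : Nat.Coprime (p ^ (s + 1)) 2 :=
      ((Nat.coprime_primes hp Nat.prime_two).2 hp2).pow_left _
    exact (pow_dvd_pow p s.le_succ).trans (hcop.dvd_of_dvd_mul_left hdvd)

lemma PrimePowFree.of_modEq (hn : PrimePowFree g s n) (h : n ≡ n' [MOD g ^ s]) :
    PrimePowFree g s n' :=
  fun p hp hpg hdvd => hn p hp hpg (((h.of_dvd (pow_dvd_pow_of_dvd hpg s)).dvd_iff dvd_rfl).2 hdvd)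

/-- `g ^ M` divides `(n + n') * (n' - n)`, and `n + n' ≡ 2 * n` shares at most the factor
`g ^ (s + 1)` with it. -/
lemma PrimePowFree.modEq_of_sq_modEq {M : ℕ} (hg : 0 < g) (hn : PrimePowFree g s n)
    (h : n ≡ n' [MOD g ^ (s + 1)]) (hsM : s + 1 ≤ M) (hsq : n ^ 2 ≡ n' ^ 2 [MOD g ^ M]) :
    n ≡ n' [MOD g ^ (M - (s + 1))] := by
  have sum_free : PrimePowFree g (s + 1) (n + n') :=
    hn.succ_two_mul.of_modEq (by rw [two_mul]; exact h.add_left n)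
  have hmul : (n + n') * n ≡ (n + n') * n' [MOD g ^ M] := by
    have hcross := hsq.add_right (n' * n)
    convert hcross using 1 <;> ring
  have hgcd : Nat.gcd (g ^ M) (n + n') ∣ g ^ (s + 1) := sum_free.gcd_pow_dvd_pow M
  refine (Nat.ModEq.cancel_left_div_gcd (by positivity) hmul).of_dvd
    (Nat.dvd_div_of_mul_dvd ?_)
  calc Nat.gcd (g ^ M) (n + n') * g ^ (M - (s + 1)) ∣ g ^ (s + 1) * g ^ (M - (s + 1)) :=
        mul_dvd_mul_right hgcd _
    _ = g ^ M := pow_mul_pow_sub g hsM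

open scoped Classical in
lemma card_filter_not_primePowFree_le (hg : g ≠ 0) (s m : ℕ) :
    #{n ∈ Ioc 0 m | ¬ PrimePowFree g s n} ≤ #g.primeFactors * (m / 2 ^ s) := by
  have hcover : {n ∈ Ioc 0 m | ¬ PrimePowFree g s n} ⊆
      g.primeFactors.biUnion fun p => {n ∈ Ioc 0 m | p ^ s ∣ n} := by
    intro n hn
    simp only [PrimePowFree, mem_filter, not_forall, not_not] at hn
    obtain ⟨hn, p, hp, hpg, hdvd⟩ := hn
    exact mem_biUnion.2 ⟨p, Nat.mem_primeFactors.2 ⟨hp, hpg, hg⟩, mem_filter.2 ⟨hn, hdvd⟩⟩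
  calc #{n ∈ Ioc 0 m | ¬ PrimePowFree g s n}
      ≤ ∑ p ∈ g.primeFactors, #{n ∈ Ioc 0 m | p ^ s ∣ n} :=
        (card_le_card hcover).trans card_biUnion_le
    _ ≤ ∑ _p ∈ g.primeFactors, m / 2 ^ s := sum_le_sum fun p hp => by
        rw [Nat.Ioc_filter_dvd_card_eq_div]
        exact Nat.div_le_div_left
          (Nat.pow_le_pow_left (Nat.prime_of_mem_primeFactors hp).two_le s) (by positivity)
    _ = #g.primeFactors * (m / 2 ^ s) := by rw [sum_const, smul_eq_mul]

end PrimePowFree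

section SquaringFibres

open Finset

lemma sq_div_strictMonoOn_Ici {K : ℕ} (hK : 0 < K) :
    StrictMonoOn (fun n => n ^ 2 / K) (Set.Ici K) := by
  intro n hn n' _ hnn'
  have hKn : K ≤ n := hn
  have hgap : n ^ 2 + K ≤ n' ^ 2 := by nlinarith
  calc n ^ 2 / K < (n ^ 2 + K) / K := by rw [Nat.add_div_right _ hK]; exact Nat.lt_succ_self _
    _ ≤ n' ^ 2 / K := Nat.div_le_div_right hgap

lemma card_filter_sq_div_mem_le {K : ℕ} (hK : 0 < K) {S : Finset ℕ} (hS : ∀ n ∈ S, K ≤ n)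
    (B : Finset ℕ) : #{n ∈ S | n ^ 2 / K ∈ B} ≤ #B :=
  card_le_card_of_injOn _ (fun _ hn => (mem_filter.1 hn).2)
    ((sq_div_strictMonoOn_Ici hK).injOn.mono fun _ hn => hS _ (mem_filter.1 hn).1)

lemma eq_of_modEq_of_div_eq {m n n' : ℕ} (hmod : n ≡ n' [MOD m]) (hdiv : n / m = n' / m) :
    n = n' := by
  rw [← Nat.div_add_mod n m, ← Nat.div_add_mod n' m, hdiv, hmod]

open scoped Classical in
lemma card_filter_primePowFree_and_sq_mod_mem_le {g s M Q : ℕ} (hg : 0 < g) (hsM : s + 1 ≤ M)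
    (hMQ : M ≤ Q) (B : Finset ℕ) :
    #{n ∈ range (g ^ (M + 1)) | PrimePowFree g s n ∧ n ^ 2 % g ^ Q ∈ B} ≤
      #B * (g ^ (s + 1) * g ^ (s + 2)) := by
  have hcard : #(B ×ˢ range (g ^ (s + 1)) ×ˢ range (g ^ (s + 2))) =
      #B * (g ^ (s + 1) * g ^ (s + 2)) := by simp
  rw [← hcard]
  refine card_le_card_of_injOn
    (fun n => (n ^ 2 % g ^ Q, n % g ^ (s + 1), n / g ^ (M - (s + 1)))) ?_ ?_
  · intro n hn
    obtain ⟨hn, -, hB⟩ := mem_filter.1 hn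
    have hdiv : n / g ^ (M - (s + 1)) < g ^ (s + 2) := by
      apply Nat.div_lt_of_lt_mul
      rw [← pow_add, show M - (s + 1) + (s + 2) = M + 1 by lia]
      exact mem_range.1 hn
    exact mem_product.2 ⟨hB, mem_product.2
      ⟨mem_range.2 (Nat.mod_lt _ (by positivity)), mem_range.2 hdiv⟩⟩
  · intro n hn n' _ heq
    obtain ⟨hsq, hmod, hdiv⟩ : n ^ 2 ≡ n' ^ 2 [MOD g ^ Q] ∧ n ≡ n' [MOD g ^ (s + 1)] ∧
        n / g ^ (M - (s + 1)) = n' / g ^ (M - (s + 1)) := by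
      simpa only [Prod.mk.injEq, Nat.ModEq] using heq
    have hfree : PrimePowFree g s n := (mem_filter.1 hn).2.1
    exact eq_of_modEq_of_div_eq
      (hfree.modEq_of_sq_modEq hg hmod hsM (hsq.of_dvd (pow_dvd_pow g hMQ))) hdiv

end SquaringFibres

section NormalSquares

open Finset

variable {g k : ℕ} {ε : ℝ}

lemma abs_blockDiscrepancy_le_of_notMem_discrepantNumbers {v N R a : ℕ} {δ : ℝ} (ha : a < g ^ R)
    (h : a ∉ discrepantNumbers g k v N R δ) : |blockDiscrepancy g k v N a| ≤ δ * N := by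
  by_contra! hlt
  exact h (mem_filter.2 ⟨mem_range.2 ha, hlt⟩)

lemma abs_blockDiscrepancy_add_add_le (hg : 0 < g) (v M d a : ℕ) :
    |blockDiscrepancy g k v (M + M + d) a| ≤
      |blockDiscrepancy g k v M a| + |blockDiscrepancy g k v M (a / g ^ M)| + d := by
  rw [blockDiscrepancy_add, blockDiscrepancy_add]
  exact (abs_add_three _ _ _).trans (by gcongr; exact abs_blockDiscrepancy_le hg _ _)

lemma exists_Lg_sq_eq (hg : 2 ≤ g) {M n : ℕ} (hn : n ∈ Ico (g ^ M) (g ^ (M + 1))) :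
    ∃ d ≤ 2, Lg g (n ^ 2) = M + M + d := by
  obtain ⟨hle, hlt⟩ := mem_Ico.1 hn
  have hn0 : n ≠ 0 := (Nat.pow_pos (by lia) |>.trans_le hle).ne'
  have hlog_ge : M * 2 ≤ Nat.log g (n ^ 2) :=
    Nat.le_log_of_pow_le (by lia) (by rw [pow_mul]; exact Nat.pow_le_pow_left hle 2)
  have hlog_lt : Nat.log g (n ^ 2) < (M + 1) * 2 :=
    Nat.log_lt_of_lt_pow (by positivity) (by
      rw [pow_mul]; exact Nat.pow_lt_pow_left hlt two_ne_zero)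
  exact ⟨Nat.log g (n ^ 2) + 1 - (M + M), by lia, by rw [Lg]; lia⟩

lemma EKNormalInt.sq_of_notMem_discrepantNumbers (hg : 2 ≤ g) (hε : 0 < ε) {M n : ℕ}
    (hM : k + 2 ≤ ε * M) (hn : n ∈ Ico (g ^ M) (g ^ (M + 1)))
    (hlow : ∀ v < g ^ k, n ^ 2 % g ^ (M + k + 2) ∉ discrepantNumbers g k v M (M + k + 2) (ε / 2))
    (hhigh : ∀ v < g ^ k, n ^ 2 / g ^ M ∉ discrepantNumbers g k v M (M + k + 2) (ε / 2)) :
    EKNormalInt g ε k (n ^ 2) := by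
  obtain ⟨hle, hlt⟩ := mem_Ico.1 hn
  have hn0 : n ≠ 0 := (Nat.pow_pos (by lia) |>.trans_le hle).ne'
  obtain ⟨d, hd, hL⟩ := exists_Lg_sq_eq hg hn
  refine EKNormalInt.of_abs_blockDiscrepancy_le hg (by positivity) fun v hv => ?_
  have hmod_lt : n ^ 2 % g ^ (M + k + 2) < g ^ (M + k + 2) := Nat.mod_lt _ (by positivity)
  have hdiv_lt : n ^ 2 / g ^ M < g ^ (M + k + 2) := by
    apply Nat.div_lt_of_lt_mul
    calc n ^ 2 < (g ^ (M + 1)) ^ 2 := Nat.pow_lt_pow_left hlt two_ne_zero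
      _ = g ^ ((M + 1) * 2) := (pow_mul _ _ _).symm
      _ ≤ g ^ (M + (M + k + 2)) := Nat.pow_le_pow_right (by lia) (by lia)
      _ = g ^ M * g ^ (M + k + 2) := pow_add _ _ _
  have low_le := abs_blockDiscrepancy_le_of_notMem_discrepantNumbers hmod_lt (hlow v hv)
  have high_le := abs_blockDiscrepancy_le_of_notMem_discrepantNumbers hdiv_lt (hhigh v hv)
  rw [blockDiscrepancy_mod_pow (by lia)] at low_le
  have hd' : (d : ℝ) ≤ 2 := by exact_mod_cast hd
  rw [hL]
  calc |blockDiscrepancy g k v (M + M + d) (n ^ 2)| + k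
      ≤ ε / 2 * M + ε / 2 * M + 2 + k := by
        linarith [abs_blockDiscrepancy_add_add_le (k := k) (show 0 < g by lia) v M d (n ^ 2)]
    _ ≤ ε * (M + M) := by linarith
    _ ≤ ε * (M + M + d : ℕ) := by
        gcongr
        push_cast
        linarith [d.cast_nonneg (α := ℝ)]

open scoped Classical in
lemma card_filter_not_eKNormalInt_sq_le (hg : 2 ≤ g) (hε : 0 < ε) {s M : ℕ} (hsM : s + 1 ≤ M)
    (hM : k + 2 ≤ ε * M) :
    #{n ∈ Ico (g ^ M) (g ^ (M + 1)) | ¬ EKNormalInt g ε k (n ^ 2)} ≤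
      #g.primeFactors * (g ^ (M + 1) / 2 ^ s) + ∑ v ∈ range (g ^ k),
        #(discrepantNumbers g k v M (M + k + 2) (ε / 2)) * (g ^ (s + 1) * g ^ (s + 2) + 1) := by
  set B := fun v => discrepantNumbers g k v M (M + k + 2) (ε / 2)
  set lowBad := fun v => {n ∈ range (g ^ (M + 1)) |
    PrimePowFree g s n ∧ n ^ 2 % g ^ (M + k + 2) ∈ B v}
  set highBad := fun v => {n ∈ Ico (g ^ M) (g ^ (M + 1)) | n ^ 2 / g ^ M ∈ B v}
  have hcover : {n ∈ Ico (g ^ M) (g ^ (M + 1)) | ¬ EKNormalInt g ε k (n ^ 2)} ⊆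
      {n ∈ Ioc 0 (g ^ (M + 1)) | ¬ PrimePowFree g s n} ∪
        (range (g ^ k)).biUnion fun v => lowBad v ∪ highBad v := by
    intro n hn
    obtain ⟨hn, hnot⟩ := mem_filter.1 hn
    obtain ⟨hle, hlt⟩ := mem_Ico.1 hn
    have hpos : 0 < g ^ M := by positivity
    by_contra hcon
    simp only [lowBad, highBad, mem_union, mem_biUnion, mem_filter, hn, true_and, mem_Ioc,
      mem_range, not_or, not_exists, not_and, not_not, hlt, hlt.le, hpos.trans_le hle] at hcon
    obtain ⟨hfree, hgood⟩ := hcon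
    exact hnot (EKNormalInt.sq_of_notMem_discrepantNumbers hg hε hM hn
      (fun v hv => (hgood v hv).1 hfree) (fun v hv => (hgood v hv).2))
  have hbad (v : ℕ) : #(lowBad v ∪ highBad v) ≤ #(B v) * (g ^ (s + 1) * g ^ (s + 2) + 1) := by
    rw [mul_add_one]
    exact (card_union_le _ _).trans (add_le_add
      (card_filter_primePowFree_and_sq_mod_mem_le (by lia) hsM (by lia) _)
      (card_filter_sq_div_mem_le (by positivity) (fun n hn => (mem_Ico.1 hn).1) _))
  exact (card_le_card hcover).trans ((card_union_le _ _).trans (add_le_add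
    (card_filter_not_primePowFree_le (by lia) _ _)
    (card_biUnion_le.trans (sum_le_sum fun v _ => hbad v))))

open scoped Classical in
lemma exists_card_filter_not_eKNormalInt_sq_le (hg : 2 ≤ g) (hε : 0 < ε) (k s : ℕ) :
    ∃ C : ℝ, ∀ M : ℕ, s + 1 ≤ M → k + 2 ≤ ε * M →
      (#{n ∈ Ico (g ^ M) (g ^ (M + 1)) | ¬ EKNormalInt g ε k (n ^ 2)} : ℝ) ≤
        (#g.primeFactors * g / 2 ^ s + C / M) * (g : ℝ) ^ M := by
  refine ⟨g ^ k * (2 * k * g ^ (k + 2) / (ε / 2) ^ 2 * (g ^ (s + 1) * g ^ (s + 2) + 1)),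
    fun M hsM hM => ?_⟩
  have hM0 : 0 < M := by lia
  calc (#{n ∈ Ico (g ^ M) (g ^ (M + 1)) | ¬ EKNormalInt g ε k (n ^ 2)} : ℝ)
      ≤ #g.primeFactors * ((g ^ (M + 1) / 2 ^ s : ℕ) : ℝ) + ∑ v ∈ range (g ^ k),
          (#(discrepantNumbers g k v M (M + k + 2) (ε / 2)) : ℝ) *
            (g ^ (s + 1) * g ^ (s + 2) + 1) := by
        exact_mod_cast card_filter_not_eKNormalInt_sq_le hg hε hsM hM
    _ ≤ #g.primeFactors * ((g : ℝ) ^ (M + 1) / 2 ^ s) + ∑ _v ∈ range (g ^ k),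
          2 * k * (g : ℝ) ^ (M + k + 2) / ((ε / 2) ^ 2 * M) * (g ^ (s + 1) * g ^ (s + 2) + 1) := by
        gcongr with v hv
        · exact_mod_cast Nat.cast_div_le (α := ℝ) (m := g ^ (M + 1)) (n := 2 ^ s)
        · exact card_discrepantNumbers_le (by lia) (mem_range.1 hv) hM0 (by lia) (by positivity)
    _ = _ := by
        rw [sum_const, card_range, nsmul_eq_mul]
        push_cast
        field_simp
        ring

open scoped Classical in
lemma isLittleO_card_filter_not_eKNormalInt_sq (hg : 2 ≤ g) (hε : 0 < ε) (k : ℕ) :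
    (fun M : ℕ => (#{n ∈ Ico (g ^ M) (g ^ (M + 1)) | ¬ EKNormalInt g ε k (n ^ 2)} : ℝ))
      =o[atTop] fun M : ℕ => (g : ℝ) ^ M := by
  refine isLittleO_iff.2 fun η hη => ?_
  have not_free_tendsto :
      Tendsto (fun s : ℕ => #g.primeFactors * (g : ℝ) / 2 ^ s) atTop (nhds 0) :=
    tendsto_const_nhds.div_atTop (tendsto_pow_atTop_atTop_of_one_lt one_lt_two)
  obtain ⟨s, hs⟩ := (not_free_tendsto.eventually_le_const (half_pos hη)).exists
  obtain ⟨C, hC⟩ := exists_card_filter_not_eKNormalInt_sq_le hg hε k s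
  filter_upwards [eventually_ge_atTop (s + 1),
    (tendsto_natCast_atTop_atTop.const_mul_atTop hε).eventually_ge_atTop ((k : ℝ) + 2),
    (tendsto_const_div_atTop_nhds_zero_nat C).eventually_le_const (half_pos hη)]
    with M hsM hM hCM
  rw [Real.norm_natCast, Real.norm_of_nonneg (by positivity)]
  exact (hC M hsM hM).trans (by gcongr; linarith)

end NormalSquares

open scoped Classical in
theorem almost_all_squares_EK_normal (g : ℕ) (hg : 2 ≤ g) (ε : ℝ) (hε : 0 < ε) (k : ℕ) :
    (fun m : ℕ => (((Finset.Icc 1 m).filter fun n => ¬ EKNormalInt g ε k (n ^ 2)).card : ℝ))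
      =o[atTop] fun m : ℕ => (m : ℝ) :=
  isLittleO_card_filter_Icc_of_Ico_pow hg _ (isLittleO_card_filter_not_eKNormalInt_sq hg hε k)
end
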